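/- arXiv:2402.08881 — 2 statements merged into one kernel-verified Lean document; each statement's English description precedes it below -/
import Mathlib

section
/- Let g: ℝ → ℝ be a smooth function such that |(g²)''(z)| = 2|(g'(z))² + g(z)g''(z)| < 1/4 for all z. Define u(x,y,z) := xy + g(z)² on ℝ³ and the smooth symmetric matrix A(z) with rows (1, −(g²)''(z)/2, 0), (−(g²)''(z)/2, 1, 0), (0, 0, 1). Then A(z) is uniformly elliptic, u satisfies div(A(z)∇u) = 0 in ℝ³, and the critical set satisfies C(u) = {(0,0,z) : g(z) = 0 or g'(z) = 0} while the singular set satisfies S(u) = {(0,0,z) : g(z) = 0}. -/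
/-!
Write `h = (g²)'`, so that `∇u = (y, x, h(z))`, and `a = -h'/2` for the off-diagonal entry of `A`.
Then `A∇u = (y + a(z) x, a(z) y + x, h(z))`, whose divergence is `a + a + h' = 0`.
Since `h' = 2((g')² + g g'')` is smaller than `1/4` in absolute value, `|a| < 1/8` and `A ≥ 1/2`.
Finally `h = 2 g g'`, so `∇u = 0` exactly when `x = y = 0` and `g(z) = 0` or `g'(z) = 0`; there
`u = g(z)²`, which gives the singular set.
-/

noncomputable section
open Set

/-- The function `u(x,y,z) = xy + g(z)²` on `ℝ³`. -/
def simonU (g : ℝ → ℝ) (X : EuclideanSpace ℝ (Fin 3)) : ℝ :=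
  X 0 * X 1 + g (X 2) ^ 2

/-- The coefficient matrix `A(z)` of Leon Simon's example. -/
def simonA (g : ℝ → ℝ) (z : ℝ) : Matrix (Fin 3) (Fin 3) ℝ :=
  !![1, -(deriv (deriv fun t => g t ^ 2) z) / 2, 0;
     -(deriv (deriv fun t => g t ^ 2) z) / 2, 1, 0;
     0, 0, 1]

/-- The differential of `u` at `x` in coordinates: `x₁ dx₀ + x₀ dx₁ + (g²)'(x₂) dx₂`. -/
theorem hasFDerivAt_simonU (g : ℝ → ℝ) (hg : ContDiff ℝ (⊤ : ℕ∞) g)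
    (x : EuclideanSpace ℝ (Fin 3)) :
    HasFDerivAt (simonU g)
      (x 0 • (EuclideanSpace.proj 1 : EuclideanSpace ℝ (Fin 3) →L[ℝ] ℝ)
        + x 1 • (EuclideanSpace.proj 0 : EuclideanSpace ℝ (Fin 3) →L[ℝ] ℝ)
        + deriv (fun t => g t ^ 2) (x 2) •
          (EuclideanSpace.proj 2 : EuclideanSpace ℝ (Fin 3) →L[ℝ] ℝ)) x := by
  have hp : ∀ i : Fin 3, HasFDerivAt (fun y : EuclideanSpace ℝ (Fin 3) => y i)
      (EuclideanSpace.proj i : EuclideanSpace ℝ (Fin 3) →L[ℝ] ℝ) x := fun i =>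
    (EuclideanSpace.proj i : EuclideanSpace ℝ (Fin 3) →L[ℝ] ℝ).hasFDerivAt
  have hd : DifferentiableAt ℝ (fun t => g t ^ 2) (x 2) :=
    ((hg.pow 2).differentiable (by simp)).differentiableAt
  exact ((hp 0).mul (hp 1)).add
    (HasDerivAt.comp_hasFDerivAt (h₂ := fun t => g t ^ 2) x hd.hasDerivAt (hp 2))

theorem gradient_simonU_eq_zero_iff (g : ℝ → ℝ) (hg : ContDiff ℝ (⊤ : ℕ∞) g)
    (x : EuclideanSpace ℝ (Fin 3)) :
    gradient (simonU g) x = 0 ↔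
      x 0 = 0 ∧ x 1 = 0 ∧ (g (x 2) = 0 ∨ deriv g (x 2) = 0) := by
  have hsq : deriv (fun t => g t ^ 2) (x 2) = 2 * g (x 2) * deriv g (x 2) := by
    have hd : DifferentiableAt ℝ g (x 2) := (hg.differentiable (by simp)).differentiableAt
    simpa using (hd.hasDerivAt.fun_pow 2).deriv
  rw [gradient, map_eq_zero_iff _ (LinearIsometryEquiv.injective _),
    (hasFDerivAt_simonU g hg x).fderiv]
  constructor
  · intro h
    have h0 := DFunLike.congr_fun h (EuclideanSpace.single 0 1)
    have h1 := DFunLike.congr_fun h (EuclideanSpace.single 1 1)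
    have h2 := DFunLike.congr_fun h (EuclideanSpace.single 2 1)
    simp [hsq] at h0 h1 h2
    exact ⟨h1, h0, h2⟩
  · rintro ⟨h0, h1, h2⟩
    have : deriv (fun t => g t ^ 2) (x 2) = 0 := by
      rw [hsq]; rcases h2 with h | h <;> simp [h]
    simp [h0, h1, this]

/-- Leon Simon's example: if `g : ℝ → ℝ` is smooth with
`|(g²)''| = 2|(g')² + g g''| < 1/4`, then for `u(x,y,z) = xy + g(z)²` the matrix `A(z)` is
smooth, symmetric and uniformly elliptic, `div(A(z)∇u) = 0` on `ℝ³`, and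
`𝒞(u) = {(0,0,z) : g(z) = 0 or g'(z) = 0}` while `𝒮(u) = {(0,0,z) : g(z) = 0}`. -/
theorem simon_example (g : ℝ → ℝ) (hg : ContDiff ℝ (⊤ : ℕ∞) g)
    (hsmall : ∀ z : ℝ, 2 * |(deriv g z) ^ 2 + g z * deriv (deriv g) z| < 1 / 4) :
    (∀ z : ℝ, |deriv (deriv fun t => g t ^ 2) z| =
        2 * |(deriv g z) ^ 2 + g z * deriv (deriv g) z| ∧
      |deriv (deriv fun t => g t ^ 2) z| < 1 / 4) ∧
    (∀ i j : Fin 3, ContDiff ℝ (⊤ : ℕ∞) fun z => simonA g z i j) ∧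
    (∀ z : ℝ, (simonA g z).IsSymm) ∧
    (∃ c : ℝ, 0 < c ∧ ∀ (z : ℝ) (v : Fin 3 → ℝ),
      c * ∑ i, v i ^ 2 ≤ ∑ i, ∑ j, simonA g z i j * v i * v j) ∧
    (∀ x : EuclideanSpace ℝ (Fin 3),
      ∑ i : Fin 3,
        fderiv ℝ
          (fun y : EuclideanSpace ℝ (Fin 3) =>
            ∑ j : Fin 3, simonA g (y 2) i j * fderiv ℝ (simonU g) y (EuclideanSpace.single j 1))
          x (EuclideanSpace.single i 1) = 0) ∧
    {x : EuclideanSpace ℝ (Fin 3) | gradient (simonU g) x = 0} =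
      {x : EuclideanSpace ℝ (Fin 3) |
        x 0 = 0 ∧ x 1 = 0 ∧ (g (x 2) = 0 ∨ deriv g (x 2) = 0)} ∧
    {x : EuclideanSpace ℝ (Fin 3) | simonU g x = 0 ∧ gradient (simonU g) x = 0} =
      {x : EuclideanSpace ℝ (Fin 3) | x 0 = 0 ∧ x 1 = 0 ∧ g (x 2) = 0} := by
  have hsq1 : (deriv fun t => g t ^ 2) = fun t => 2 * g t * deriv g t := by
    funext t
    have hd : DifferentiableAt ℝ g t := (hg.differentiable (by simp)).differentiableAt
    simpa using (hd.hasDerivAt.fun_pow 2).deriv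
  have hg' : ContDiff ℝ (⊤ : ℕ∞) (deriv g) := (contDiff_infty_iff_deriv.1 hg).2
  have hh : ContDiff ℝ (⊤ : ℕ∞) (deriv fun t => g t ^ 2) :=
    (contDiff_infty_iff_deriv.1 (hg.pow 2)).2
  have hh' : ContDiff ℝ (⊤ : ℕ∞) (deriv (deriv fun t => g t ^ 2)) :=
    (contDiff_infty_iff_deriv.1 hh).2
  have hsq2 : ∀ z, deriv (deriv fun t => g t ^ 2) z =
      2 * ((deriv g z) ^ 2 + g z * deriv (deriv g) z) := by
    intro z
    have hd : DifferentiableAt ℝ g z := (hg.differentiable (by simp)).differentiableAt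
    have hd' : DifferentiableAt ℝ (deriv g) z := (hg'.differentiable (by simp)).differentiableAt
    rw [hsq1]
    refine ((hd.hasDerivAt.const_mul 2).mul hd'.hasDerivAt).deriv.trans ?_
    ring
  have habs : ∀ z, |deriv (deriv fun t => g t ^ 2) z| =
      2 * |(deriv g z) ^ 2 + g z * deriv (deriv g) z| := by
    intro z
    rw [hsq2, abs_mul, abs_two]
  have hlt : ∀ z, |deriv (deriv fun t => g t ^ 2) z| < 1 / 4 := fun z =>
    (habs z).trans_lt (hsmall z)
  refine ⟨fun z => ⟨habs z, hlt z⟩, ?_, ?_, ⟨1 / 2, by norm_num, ?_⟩, ?_, ?_, ?_⟩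
  · have ha : ContDiff ℝ (⊤ : ℕ∞) fun z => -(deriv (deriv fun t => g t ^ 2) z) / 2 :=
      hh'.neg.div_const 2
    intro i j
    fin_cases i <;> fin_cases j <;> first | exact ha | exact contDiff_const
  · intro z
    ext i j
    fin_cases i <;> fin_cases j <;> simp [simonA]
  · intro z v
    obtain ⟨h1, h2⟩ := abs_lt.1 (hlt z)
    simp only [simonA, Fin.sum_univ_three]
    simp
    generalize deriv (deriv fun t => g t ^ 2) z = b at h1 h2
    -- Here `b = h'`; adding `(1/4 - b)(v₀ + v₁)² ≥ 0` and `(1/4 + b)(v₀ - v₁)² ≥ 0` gives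
    -- `b v₀ v₁ ≤ (v₀² + v₁²) / 8`.
    nlinarith [mul_nonneg (by linarith : (0 : ℝ) ≤ 1 / 4 - b) (sq_nonneg (v 0 + v 1)),
      mul_nonneg (by linarith : (0 : ℝ) ≤ 1 / 4 + b) (sq_nonneg (v 0 - v 1)),
      sq_nonneg (v 0), sq_nonneg (v 1), sq_nonneg (v 2)]
  · intro x
    have hp : ∀ i : Fin 3, HasFDerivAt (fun y : EuclideanSpace ℝ (Fin 3) => y i)
        (EuclideanSpace.proj i : EuclideanSpace ℝ (Fin 3) →L[ℝ] ℝ) x := fun i =>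
      (EuclideanSpace.proj i : EuclideanSpace ℝ (Fin 3) →L[ℝ] ℝ).hasFDerivAt
    have ha : HasDerivAt (fun z => -(deriv (deriv fun t => g t ^ 2) z) / 2)
        (deriv (fun z => -(deriv (deriv fun t => g t ^ 2) z) / 2) (x 2)) (x 2) :=
      (((hh'.neg.div_const 2).differentiable (by simp)).differentiableAt).hasDerivAt
    have hz : HasDerivAt (deriv fun t => g t ^ 2) (deriv (deriv fun t => g t ^ 2) (x 2)) (x 2) :=
      ((hh.differentiable (by simp)).differentiableAt).hasDerivAt
    have hax := ha.comp_hasFDerivAt x (hp 2)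
    -- The three components of the flux `A∇u`.
    have e0 : (fun y : EuclideanSpace ℝ (Fin 3) => ∑ j : Fin 3, simonA g (y 2) 0 j *
        fderiv ℝ (simonU g) y (EuclideanSpace.single j 1)) =
        fun y => y 1 + (-(deriv (deriv fun t => g t ^ 2) (y 2)) / 2) * y 0 := by
      funext y
      rw [Fin.sum_univ_three, (hasFDerivAt_simonU g hg y).fderiv]
      simp [simonA]
    have e1 : (fun y : EuclideanSpace ℝ (Fin 3) => ∑ j : Fin 3, simonA g (y 2) 1 j *
        fderiv ℝ (simonU g) y (EuclideanSpace.single j 1)) =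
        fun y => (-(deriv (deriv fun t => g t ^ 2) (y 2)) / 2) * y 1 + y 0 := by
      funext y
      rw [Fin.sum_univ_three, (hasFDerivAt_simonU g hg y).fderiv]
      simp [simonA]
    have e2 : (fun y : EuclideanSpace ℝ (Fin 3) => ∑ j : Fin 3, simonA g (y 2) 2 j *
        fderiv ℝ (simonU g) y (EuclideanSpace.single j 1)) =
        fun y => deriv (fun t => g t ^ 2) (y 2) := by
      funext y
      rw [Fin.sum_univ_three, (hasFDerivAt_simonU g hg y).fderiv]
      simp [simonA]
    have d0 := ((hp 1).add (hax.mul (hp 0))).fderiv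
    have d1 := ((hax.mul (hp 1)).add (hp 0)).fderiv
    have d2 := (hz.comp_hasFDerivAt x (hp 2)).fderiv
    rw [Fin.sum_univ_three, e0, e1, e2]
    -- The functions agree with those in `d0`, `d1`, `d2` only up to unfolding pointwise operations.
    erw [d0, d1, d2]
    simp
  · ext x
    exact gradient_simonU_eq_zero_iff g hg x
  · ext x
    simp only [mem_ofPred_eq, gradient_simonU_eq_zero_iff g hg x]
    constructor
    · rintro ⟨hu, h0, h1, -⟩
      exact ⟨h0, h1, by simpa [simonU, h0] using hu⟩
    · rintro ⟨h0, h1, h2⟩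
      exact ⟨by simp [simonU, h0, h2], h0, h1, Or.inl h2⟩
end
end

section
/- Let u be a nonconstant harmonic function in B_3(0) ⊂ ℝ^d with normalized frequency N(0,3) ≤ Λ. Let 0 < r < 1 and X₁, X₂ ∈ B_1(0) with |X₁ − X₂| ≤ r/2, and assume W(X₁,r) and W(X₂,r) are small, where W(X, r) := N(X, 3r/2) − N(X, r/2). If in addition X₁ is a critical point of u (∇u(X₁) = 0), then |u(X₁) − u(X₂)| ≤ C (W(X₁,r)^{1/2} + W(X₂,r)^{1/2}) · (|B_r|^{−1} ∬_{B_r(X₁)} |u − u(X₁)|² dZ)^{1/2}, with C depending only on d and Λ. -/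
/-!
The estimate is proved for `v = u (X₂ + ·) - u X₂` at the critical point `a = X₁ - X₂`, using only the
pinching of the frequency about `X₂`. Write `E v = x · ∇v` for the Euler field, and `h(s)` for the
integral of `v (s w) ^ 2` over the unit sphere.

* Almgren's formula expresses the derivative of the frequency `N` through the defect `E v - N v` on
  the sphere of radius `s`. Hence for some `s` between `0.6 r` and `0.8 r` the mean square `S` of the
  defect on that sphere is at most `2 W h(s)` (`fr_deriv`, `pinch`).
* `E v - N v` is harmonic and equals `-N v(a)` at the critical point `a`, so interior estimates bound
  `N² v(a)²` by a constant times `S`. As `v(0) = 0`, the frequency cannot drop below `1/2` when `W` is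
  small (`gap_zero`). Therefore `v(a)² ≤ C W h(s)`.
* It remains to bound `h(s)` by the average of `(v - v(a))²` over `B_r(a)` plus a multiple of
  `v(a)²`, the latter being absorbed for small `W`. The ball `B_r(a)` comfortably contains the half of
  the sphere of radius `s` facing `a`, but not all of it. The other half is reached by symmetry: let `k`
  be an integer nearest to `N`. The part of `v` whose parity is opposite to that of `k` has no
  component of homogeneity `k`, so a spectral gap (`gap_parity`) bounds it on the sphere by the defect
  (`wrong_parity_small`). Thus `v(-y)` is `(-1)^k v(y)` up to a small error, and the half sphere facing
  `a` controls the whole of `h(s)`. These points are combined in `core`.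

The constants depend on the dimension only. The remaining lemmas provide the tools: polar coordinates
and the divergence theorem on balls, from rotation invariance of the surface measure (`polar`,
`div_thm`); the proportionality of Hausdorff and surface measure on spheres, from uniqueness of
rotation invariant measures (`exists_hausdorff_const`); and the smoothness of harmonic functions, from
the mean value property (`exists_smooth`).
-/


noncomputable section
open Metric Set MeasureTheory
open scoped ENNReal RealInnerProductSpace

abbrev ES (n : ℕ) := EuclideanSpace ℝ (Fin n)

/-- `u` is harmonic on `s`: twice continuously differentiable with vanishing Laplacian. -/
def IsHarmonicOn {n : ℕ} (u : ES n → ℝ) (s : Set (ES n)) : Prop :=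
  ContDiffOn ℝ 2 u s ∧
    ∀ x ∈ s,
      (∑ i : Fin n, iteratedFDerivWithin ℝ 2 u s x fun _ => EuclideanSpace.single i 1) = 0

/-- The interior Dirichlet energy `D(p,r) = ∬_{B_r(p)} |∇u|²`. -/
def iD {n : ℕ} (u : ES n → ℝ) (p : ES n) (r : ℝ) : ℝ :=
  ∫ x in ball p r, ‖gradient u x‖ ^ 2

/-- The interior normalized boundary term `H(p,r) = ∫_{∂B_r(p)} |u - u(p)|² dH^{n-1}`. -/
def iH {n : ℕ} (u : ES n → ℝ) (p : ES n) (r : ℝ) : ℝ :=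
  ∫ x in sphere p r, (u x - u p) ^ 2 ∂μH[(n : ℝ) - 1]

/-- The interior normalized frequency function `N(p,r) = r D(p,r) / H(p,r)`. -/
def iN {n : ℕ} (u : ES n → ℝ) (p : ES n) (r : ℝ) : ℝ :=
  r * iD u p r / iH u p r

/-- The frequency pinching `W(p,r) = N(p, 3r/2) - N(p, r/2)`. -/
def iW {n : ℕ} (u : ES n → ℝ) (p : ES n) (r : ℝ) : ℝ :=
  iN u p (3 * r / 2) - iN u p (r / 2)

/-- Radial derivative of `u` with vertex `p`. -/
def radialDeriv {n : ℕ} (u : ES n → ℝ) (p x : ES n) : ℝ :=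
  ⟪gradient u x, ‖x - p‖⁻¹ • (x - p)⟫

open scoped Pointwise

/-! ### Surface measure of the unit sphere and polar coordinates -/

/-- The surface measure of the unit sphere, pushed forward to the ambient space so that rotations
and continuous functions on the whole space apply to it without subtypes. -/
def sph (n : ℕ) : Measure (ES n) :=
  (volume : Measure (ES n)).toSphere.map Subtype.val

instance (n : ℕ) : IsFiniteMeasure (sph n) := by
  unfold sph; infer_instance

lemma sph_ae_norm (n : ℕ) : ∀ᵐ w ∂(sph n), ‖w‖ = 1 := by
  unfold sph
  rw [ae_map_iff measurable_subtype_coe.aemeasurable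
    (measurableSet_eq_fun measurable_norm measurable_const)]
  exact Filter.Eventually.of_forall fun w => by simp

lemma sph_apply (n : ℕ) {B : Set (ES n)} (hB : MeasurableSet B) :
    sph n B = n * volume (Ioo (0 : ℝ) 1 • (sphere (0 : ES n) 1 ∩ B)) := by
  unfold sph
  rw [Measure.map_apply measurable_subtype_coe hB,
    Measure.toSphere_apply' _ (measurable_subtype_coe hB), Subtype.image_preimage_coe]
  simp

lemma sph_map (n : ℕ) (R : ES n ≃ₗᵢ[ℝ] ES n) : (sph n).map R = sph n := by
  ext B hB
  have hR : Measurable R := R.continuous.measurable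
  rw [Measure.map_apply hR hB, sph_apply n (hR hB), sph_apply n hB]
  congr 1
  have : Ioo (0 : ℝ) 1 • (sphere (0 : ES n) 1 ∩ R ⁻¹' B)
      = R ⁻¹' (Ioo (0 : ℝ) 1 • (sphere (0 : ES n) 1 ∩ B)) := by
    ext x
    simp only [mem_smul, mem_preimage, mem_inter_iff, mem_sphere_iff_norm, sub_zero]
    constructor
    · rintro ⟨t, ht, y, ⟨hy, hyB⟩, rfl⟩
      exact ⟨t, ht, R y, ⟨by simpa using hy, hyB⟩, by simp⟩
    · rintro ⟨t, ht, y, ⟨hy, hyB⟩, hxy⟩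
      exact ⟨t, ht, R.symm y, ⟨by simpa using hy, by simpa using hyB⟩, by
        rw [← map_smul, hxy]; simp⟩
  rw [this]
  exact R.measurePreserving.measure_preimage_equiv (f := R.toMeasurableEquiv) _

lemma sph_integral_comp (n : ℕ) (R : ES n ≃ₗᵢ[ℝ] ES n) (f : ES n → ℝ) :
    ∫ w, f (R w) ∂(sph n) = ∫ w, f w ∂(sph n) := by
  conv_rhs => rw [← sph_map n R]
  exact (integral_map_equiv R.toMeasurableEquiv f).symm

lemma sph_real_univ_pos (m : ℕ) : 0 < (sph (m + 1)).real univ := by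
  have : sph (m+1) ≠ 0 := by
    unfold sph
    rw [Ne, Measure.map_eq_zero_iff measurable_subtype_coe.aemeasurable]
    exact Measure.toSphere_ne_zero _
  rw [measureReal_def]
  exact ENNReal.toReal_pos (by simpa using this) (by finiteness)

/-- Unnormalized spherical mean `s ↦ ∫ f (s ω) dσ(ω)` about the origin. -/
def sM {n : ℕ} (f : ES n → ℝ) (s : ℝ) : ℝ := ∫ w, f (s • w) ∂(sph n)

lemma sph_integrable {n : ℕ} {f : ES n → ℝ} (hf : Continuous f) : Integrable f (sph n) := by
  obtain ⟨C, hC⟩ := (isCompact_closedBall (0 : ES n) 1).exists_bound_of_continuousOn hf.continuousOn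
  refine Integrable.of_bound hf.aestronglyMeasurable C ?_
  filter_upwards [sph_ae_norm n] with w hw
  exact hC w (by simp [hw])

lemma sM_integrable {n : ℕ} {f : ES n → ℝ} (hf : Continuous f) (s : ℝ) :
    Integrable (fun w => f (s • w)) (sph n) :=
  sph_integrable (by fun_prop)

/-- Integration over a ball centered at the origin in polar coordinates. -/
lemma polar {m : ℕ} {f : ES (m + 1) → ℝ} (hf : Continuous f) {s : ℝ} (hs : 0 ≤ s) :
    ∫ x in ball 0 s, f x = ∫ t in (0 : ℝ)..s, t ^ m * sM f t := by
  set g : ES (m + 1) → ℝ := (ball 0 s).indicator f with hg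
  have hgi : Integrable g := by
    rw [hg, integrable_indicator_iff measurableSet_ball]
    exact (hf.continuousOn.integrableOn_compact (isCompact_closedBall 0 s)).mono_set
      ball_subset_closedBall
  have mp := (volume : Measure (ES (m+1))).measurePreserving_homeomorphUnitSphereProd
  have emb := (homeomorphUnitSphereProd (ES (m+1))).measurableEmbedding
  set G : sphere (0 : ES (m+1)) 1 × Ioi (0 : ℝ) → ℝ := fun p => g (p.2.1 • p.1.1) with hG
  have hcomp : ∀ x : ({(0 : ES (m+1))}ᶜ : Set (ES (m+1))),
      G (homeomorphUnitSphereProd _ x) = g x.1 := by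
    intro x
    simp only [hG, homeomorphUnitSphereProd_apply_snd_coe, homeomorphUnitSphereProd_apply_fst_coe]
    rw [smul_inv_smul₀]
    exact norm_ne_zero_iff.2 x.2
  have hGi : Integrable G ((volume : Measure (ES (m+1))).toSphere.prod
      (Measure.volumeIoiPow (Module.finrank ℝ (ES (m+1)) - 1))) := by
    rw [← mp.integrable_comp_emb emb]
    have : G ∘ (homeomorphUnitSphereProd (ES (m+1))) = g ∘ Subtype.val := funext hcomp
    rw [this, ← integrableOn_iff_comap_subtypeVal (measurableSet_singleton _).compl]
    exact hgi.integrableOn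
  have h1 : ∫ x in ball 0 s, f x = ∫ p, G p ∂((volume : Measure (ES (m+1))).toSphere.prod
      (Measure.volumeIoiPow (Module.finrank ℝ (ES (m+1)) - 1))) := by
    rw [← mp.integral_comp emb, ← integral_indicator measurableSet_ball]
    simp_rw [hcomp]
    rw [integral_subtype_comap (measurableSet_singleton _).compl g, restrict_compl_singleton]
  rw [h1, integral_prod_symm _ hGi]
  have hfr : Module.finrank ℝ (ES (m+1)) - 1 = m := by simp
  rw [hfr]
  simp only [Measure.volumeIoiPow, ENNReal.ofReal]
  rw [integral_withDensity_eq_integral_smul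
      ((measurable_subtype_coe.pow_const _).real_toNNReal)]
  rw [integral_subtype_comap measurableSet_Ioi (fun t : ℝ => Real.toNNReal (t ^ m) •
      ∫ w, g (t • w.1) ∂(volume : Measure (ES (m+1))).toSphere)]
  rw [intervalIntegral.integral_of_le hs, integral_Ioc_eq_integral_Ioo,
    ← integral_indicator measurableSet_Ioi,
    ← integral_indicator measurableSet_Ioo]
  congr 1
  ext t
  by_cases ht : 0 < t
  · rw [indicator_of_mem (show t ∈ Ioi (0:ℝ) from ht), NNReal.smul_def,
      Real.coe_toNNReal _ (pow_nonneg ht.le _)]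
    by_cases hts : t < s
    · rw [indicator_of_mem (show t ∈ Ioo 0 s from ⟨ht, hts⟩), smul_eq_mul, sM, sph,
        integral_map measurable_subtype_coe.aemeasurable (by
          exact (hf.comp (continuous_const_smul t)).aestronglyMeasurable)]
      congr 2
      ext w
      rw [hg, indicator_of_mem]
      simp [norm_smul, abs_of_pos ht, hts]
    · rw [indicator_of_notMem (show t ∉ Ioo 0 s from fun h => hts h.2)]
      have : ∀ w : sphere (0 : ES (m+1)) 1, g (t • w.1) = 0 := by
        intro w
        rw [hg, indicator_of_notMem]
        simpa [norm_smul, abs_of_pos ht] using hts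
      simp [this]
  · rw [indicator_of_notMem (show t ∉ Ioi (0:ℝ) from ht), indicator_of_notMem]
    exact fun h => ht h.1

/-! ### Uniqueness of the rotation-invariant measure on the sphere -/

/-- A rotation invariant measure gives the same mass to balls of equal radius centered on the unit
sphere, since a reflection exchanges any two centers. -/
lemma ball_measure_eq {n : ℕ} {S : Measure (ES n)}
    (hS : ∀ R : ES n ≃ₗᵢ[ℝ] ES n, S.map R = S) {x y : ES n} (hx : ‖x‖ = 1) (hy : ‖y‖ = 1)
    (ρ : ℝ) : S.real (ball x ρ) = S.real (ball y ρ) := by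
  set R := (Submodule.span ℝ {x - y})ᗮ.reflection with hR
  have hxy : R x = y := Submodule.reflection_sub (by rw [hx, hy])
  have h := congrArg (fun μ => μ.real (ball y ρ)) (hS R)
  rw [← h, measureReal_def, measureReal_def, Measure.map_apply R.continuous.measurable
    measurableSet_ball, ← hxy, R.preimage_ball]
  simp

/-- A rotation invariant finite measure on the unit sphere is unique up to a factor. Averaging `f`
over pairs of points at distance less than `ρ`, in either order, gives `a ∫ f dT` and `b ∫ f dS`,
where `a` and `b` are the masses of a ball of radius `ρ` for `S` and `T`; by uniform continuity
these differ by little when `ρ` is small. -/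
lemma invariant_unique {n : ℕ} {S T : Measure (ES n)} [IsFiniteMeasure S] [IsFiniteMeasure T]
    (hS : ∀ R : ES n ≃ₗᵢ[ℝ] ES n, S.map R = S) (hT : ∀ R : ES n ≃ₗᵢ[ℝ] ES n, T.map R = T)
    (hS1 : ∀ᵐ w ∂S, ‖w‖ = 1) (hT1 : ∀ᵐ w ∂T, ‖w‖ = 1) {f : ES n → ℝ} (hf : Continuous f) :
    (∫ w, f w ∂T) * S.real univ = T.real univ * ∫ w, f w ∂S := by
  by_cases hS0 : S = 0
  · simp [hS0]
  have : NeZero S := ⟨hS0⟩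
  obtain ⟨x0, hx0⟩ := hS1.exists
  obtain ⟨C, hC⟩ := (isCompact_closedBall (0 : ES n) 1).exists_bound_of_continuousOn hf.continuousOn
  have huc := (isCompact_closedBall (0 : ES n) 1).uniformContinuousOn_of_continuous hf.continuousOn
  rw [Metric.uniformContinuousOn_iff] at huc
  have key : ∀ ω > 0, |(∫ w, f w ∂T) * S.real univ - T.real univ * ∫ w, f w ∂S|
      ≤ ω * (T.real univ * S.real univ) := by
    intro ω hω
    obtain ⟨ρ, hρ, huc⟩ := huc ω hω
    set a := S.real (ball x0 ρ) with ha
    set b := T.real (ball x0 ρ) with hb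
    have ha0 : 0 < a := by
      refine lt_of_le_of_ne measureReal_nonneg fun h0 => hS0 ?_
      have hs : S (sphere 0 1) = 0 := by
        refine measure_null_of_locally_null _ fun x hx => ⟨ball x ρ,
          mem_nhdsWithin_of_mem_nhds (ball_mem_nhds x hρ), ?_⟩
        have := ball_measure_eq hS (by simpa using hx) hx0 ρ
        rw [← ha, ← h0] at this
        simpa [measureReal_def, ENNReal.toReal_eq_zero_iff] using this
      rw [← Measure.measure_univ_eq_zero]
      have h2 : S (sphere 0 1)ᶜ = 0 := by
        rw [← compl_mem_ae_iff, compl_compl]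
        filter_upwards [hS1] with w hw
        simpa using hw
      rw [← union_compl_self (sphere (0 : ES n) 1)]
      exact measure_union_null hs h2
    set K : Set (ES n × ES n) := {p | dist p.1 p.2 < ρ} with hK
    have hKm : MeasurableSet K := measurableSet_lt (by fun_prop) (by fun_prop)
    have p1 : ∀ᵐ p ∂(T.prod S), ‖p.1‖ = 1 := Measure.quasiMeasurePreserving_fst.ae hT1
    have p2 : ∀ᵐ p ∂(T.prod S), ‖p.2‖ = 1 := Measure.quasiMeasurePreserving_snd.ae hS1
    -- Fubini for the indicator of `K`: every slice of `K` is a ball of radius `ρ`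
    have I1 : ∀ g : ES n → ℝ, Continuous g → (∀ x ∈ closedBall (0 : ES n) 1, ‖g x‖ ≤ max C 1) →
        Integrable (K.indicator fun p => g p.1) (T.prod S) ∧
        ∫ p, K.indicator (fun p => g p.1) p ∂(T.prod S) = a * ∫ w, g w ∂T := by
      intro g hg hgC
      have hi : Integrable (K.indicator fun p => g p.1) (T.prod S) := by
        refine (Integrable.of_bound (hg.comp continuous_fst).aestronglyMeasurable (max C 1) ?_).indicator hKm
        filter_upwards [p1] with p hp
        exact hgC _ (by simp [hp])
      refine ⟨hi, ?_⟩
      rw [integral_prod _ hi, ← integral_const_mul]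
      refine integral_congr_ae ?_
      filter_upwards [hT1] with x hx
      have : (fun y => K.indicator (fun p : ES n × ES n => g p.1) (x, y))
          = (ball x ρ).indicator fun _ => g x := by
        ext y
        simp [indicator, hK, dist_comm]
      rw [this, integral_indicator_const _ measurableSet_ball, smul_eq_mul,
        ball_measure_eq hS hx hx0]
    have I2 : ∀ g : ES n → ℝ, Continuous g → (∀ x ∈ closedBall (0 : ES n) 1, ‖g x‖ ≤ max C 1) →
        Integrable (K.indicator fun p => g p.2) (T.prod S) ∧
        ∫ p, K.indicator (fun p => g p.2) p ∂(T.prod S) = b * ∫ w, g w ∂S := by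
      intro g hg hgC
      have hi : Integrable (K.indicator fun p => g p.2) (T.prod S) := by
        refine (Integrable.of_bound (hg.comp continuous_snd).aestronglyMeasurable (max C 1) ?_).indicator hKm
        filter_upwards [p2] with p hp
        exact hgC _ (by simp [hp])
      refine ⟨hi, ?_⟩
      rw [integral_prod_symm _ hi, ← integral_const_mul]
      refine integral_congr_ae ?_
      filter_upwards [hS1] with x hx
      have : (fun y => K.indicator (fun p : ES n × ES n => g p.2) (y, x))
          = (ball x ρ).indicator fun _ => g x := by
        ext y
        simp [indicator, hK]
      rw [this, integral_indicator_const _ measurableSet_ball, smul_eq_mul,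
        ball_measure_eq hT hx hx0]
    obtain ⟨i1, e1⟩ := I1 f hf fun x hx => (hC x hx).trans (le_max_left _ _)
    obtain ⟨i2, e2⟩ := I2 f hf fun x hx => (hC x hx).trans (le_max_left _ _)
    obtain ⟨j1, d1⟩ := I1 (fun _ => 1) continuous_const fun x hx => by simp
    obtain ⟨j2, d2⟩ := I2 (fun _ => 1) continuous_const fun x hx => by simp
    have hab : a * T.real univ = b * S.real univ := by
      have := d1.symm.trans d2
      simpa using this
    have hdiff : |a * ∫ w, f w ∂T - b * ∫ w, f w ∂S| ≤ ω * (a * T.real univ) := by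
      have hω1 : ∫ p, K.indicator (fun _ => ω) p ∂(T.prod S) = ω * (a * T.real univ) := by
        have h1 : (fun p => K.indicator (fun _ => ω) p) =
            fun p => ω * K.indicator (fun _ => (1 : ℝ)) p := by
          ext p; by_cases hp : p ∈ K <;> simp [hp]
        rw [h1, integral_const_mul, d1]
        simp
      rw [← e1, ← e2, ← integral_sub i1 i2, ← hω1, ← Real.norm_eq_abs]
      refine norm_integral_le_of_norm_le ((integrable_const ω).indicator hKm) ?_
      filter_upwards [p1, p2] with p hp1 hp2
      by_cases hp : p ∈ K
      · simp only [indicator_of_mem hp]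
        rw [← dist_eq_norm]
        exact (huc _ (by simp [hp1]) _ (by simp [hp2]) hp).le
      · simp [hp]
    have h3 : a * |(∫ w, f w ∂T) * S.real univ - T.real univ * ∫ w, f w ∂S|
        ≤ a * (ω * (T.real univ * S.real univ)) := by
      rw [← abs_of_pos ha0, ← abs_mul, abs_of_pos ha0]
      have : a * ((∫ w, f w ∂T) * S.real univ - T.real univ * ∫ w, f w ∂S)
          = (a * ∫ w, f w ∂T - b * ∫ w, f w ∂S) * S.real univ := by
        linear_combination (-∫ w, f w ∂S) * hab
      rw [this, abs_mul, abs_of_nonneg (measureReal_nonneg (μ := S) (s := univ))]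
      calc _ ≤ ω * (a * T.real univ) * S.real univ := by gcongr
        _ = _ := by ring
    exact le_of_mul_le_mul_left h3 ha0
  rw [← sub_eq_zero, ← abs_eq_zero]
  refine le_antisymm ?_ (abs_nonneg _)
  by_contra! h
  set Q := T.real univ * S.real univ
  have hQ : 0 ≤ Q := by positivity
  have := key (|(∫ w, f w ∂T) * S.real univ - T.real univ * ∫ w, f w ∂S| / (2 * (Q + 1))) (by positivity)
  set z := |(∫ w, f w ∂T) * S.real univ - T.real univ * ∫ w, f w ∂S|
  rw [div_mul_eq_mul_div, le_div_iff₀ (by positivity)] at this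
  nlinarith

/-! ### Hausdorff measure of spheres -/

lemma normalize_lipschitz {n : ℕ} :
    LipschitzOnWith 2 (fun x : ES n => ‖x‖⁻¹ • x) {x | 1 ≤ ‖x‖} := by
  refine LipschitzOnWith.of_dist_le_mul fun x hx y hy => ?_
  simp only [mem_ofPred_eq] at hx hy
  rw [dist_eq_norm, dist_eq_norm]
  have hx0 : 0 < ‖x‖ := by linarith
  have hy0 : 0 < ‖y‖ := by linarith
  have e : ‖x‖⁻¹ • x - ‖y‖⁻¹ • y = ‖x‖⁻¹ • ((x - y) + ((‖y‖ - ‖x‖) * ‖y‖⁻¹) • y) := by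
    rw [smul_add, smul_sub, smul_smul]
    have : ‖x‖⁻¹ * ((‖y‖ - ‖x‖) * ‖y‖⁻¹) = ‖x‖⁻¹ - ‖y‖⁻¹ := by field_simp
    rw [this, sub_smul]; abel
  rw [e, norm_smul, norm_inv, norm_norm]
  have h1 : ‖x‖⁻¹ ≤ 1 := inv_le_one_of_one_le₀ hx
  have h2 : ‖(x - y) + ((‖y‖ - ‖x‖) * ‖y‖⁻¹) • y‖ ≤ 2 * ‖x - y‖ := by
    refine (norm_add_le _ _).trans ?_
    rw [norm_smul, norm_mul, norm_inv, norm_norm, mul_assoc, inv_mul_cancel₀ hy0.ne', mul_one]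
    have := abs_norm_sub_norm_le y x
    rw [norm_sub_rev y x] at this
    rw [Real.norm_eq_abs]; linarith
  calc _ ≤ 1 * (2 * ‖x - y‖) := by gcongr
    _ = _ := by simp

/-- The unit sphere is covered by the radial projections of the faces of a cube, hence has
finite Hausdorff measure. -/
lemma hausdorff_sphere_lt_top (m : ℕ) : μH[(m : ℝ)] (sphere (0 : ES (m + 1)) 1) < ∞ := by
  let face : Fin (m+1) × Bool → (Fin m → ℝ) → ES (m+1) := fun i y =>
    WithLp.toLp 2 (Fin.insertNth i.1 (if i.2 then 1 else -1 : ℝ) y)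
  let F : Fin (m+1) × Bool → (Fin m → ℝ) → ES (m+1) := fun i y => ‖face i y‖⁻¹ • face i y
  have hcov : sphere (0 : ES (m+1)) 1 ⊆ ⋃ i, F i '' (closedBall 0 1) := by
    intro x hx
    have hx1 : ‖x‖ = 1 := by simpa using hx
    obtain ⟨i, -, hi⟩ := Finset.exists_max_image Finset.univ (fun i => |x i|) ⟨0, Finset.mem_univ _⟩
    have hxi : x i ≠ 0 := by
      intro h0
      have : x = 0 := by
        ext j
        have := hi j (Finset.mem_univ _)
        rw [h0, abs_zero] at this
        simpa using this
      simp [this] at hx1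
    have hpos : 0 < |x i| := abs_pos.2 hxi
    refine mem_iUnion.2 ⟨(i, decide (0 < x i)), fun j => |x i|⁻¹ * x (i.succAbove j), ?_, ?_⟩
    · rw [mem_closedBall_zero_iff, pi_norm_le_iff_of_nonneg zero_le_one]
      intro j
      rw [norm_mul, norm_inv, Real.norm_eq_abs, abs_abs, Real.norm_eq_abs, inv_mul_le_iff₀ hpos, mul_one]
      exact hi _ (Finset.mem_univ _)
    · have : face (i, decide (0 < x i)) (fun j => |x i|⁻¹ * x (i.succAbove j)) = |x i|⁻¹ • x := by
        ext k
        refine Fin.succAboveCases i ?_ (fun j => ?_) k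
        · simp only [face, Fin.insertNth_apply_same, PiLp.smul_apply, smul_eq_mul]
          by_cases h : 0 < x i
          · simp [h, abs_of_pos h, hxi]
          · have h' : x i < 0 := lt_of_le_of_ne (not_lt.1 h) hxi
            simp [h, abs_of_neg h', hxi]
        · simp [face]
      simp only [F]
      rw [this, norm_smul, hx1, smul_smul]
      simp [hpos.ne']
  have hlip : ∀ i, ∃ K, LipschitzOnWith K (F i) univ := by
    intro i
    have h1 : LipschitzWith 1 (fun y : Fin m → ℝ =>
        (Fin.insertNth i.1 (if i.2 then 1 else -1 : ℝ) y : Fin (m+1) → ℝ)) := by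
      refine LipschitzWith.of_dist_le_mul fun y z => ?_
      rw [NNReal.coe_one, one_mul, dist_pi_le_iff dist_nonneg]
      intro k
      refine Fin.succAboveCases i.1 ?_ (fun j => ?_) k
      · simp
      · simpa using dist_le_pi_dist y z j
    have h2 := (PiLp.lipschitzWith_toLp 2 (fun _ : Fin (m+1) => ℝ)).comp h1
    refine ⟨_, normalize_lipschitz.comp (h2.lipschitzOnWith (s := univ)) ?_⟩
    intro y _
    show 1 ≤ ‖face i y‖
    refine le_trans ?_ (PiLp.norm_apply_le (face i y) i.1)
    simp only [face, Fin.insertNth_apply_same]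
    split_ifs <;> simp
  refine (measure_mono hcov).trans_lt ((measure_iUnion_le _).trans_lt ?_)
  rw [tsum_fintype, ENNReal.sum_lt_top]
  intro i _
  obtain ⟨K, hK⟩ := hlip i
  refine ((hK.mono (subset_univ _)).hausdorffMeasure_image_le (Nat.cast_nonneg m)).trans_lt ?_
  refine ENNReal.mul_lt_top (by finiteness) ?_
  have := MeasureTheory.hausdorffMeasure_pi_real (ι := Fin m)
  rw [Fintype.card_fin] at this
  rw [this]
  exact measure_closedBall_lt_top

/-- Dropping the first coordinate is 1-Lipschitz and maps the unit sphere onto a set containing the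
open unit ball one dimension lower. -/
lemma hausdorff_sphere_pos (m : ℕ) : 0 < μH[(m : ℝ)] (sphere (0 : ES (m + 1)) 1) := by
  let π : ES (m+1) → (Fin m → ℝ) := fun x j => x j.succ
  have hπ : LipschitzWith 1 π := by
    refine LipschitzWith.of_dist_le_mul fun y z => ?_
    rw [NNReal.coe_one, one_mul, dist_pi_le_iff dist_nonneg]
    intro k
    rw [dist_eq_norm, dist_eq_norm]
    exact PiLp.norm_apply_le (y - z) k.succ
  have hsub : {y : Fin m → ℝ | ∑ j, y j ^ 2 < 1} ⊆ π '' sphere 0 1 := by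
    intro y hy
    refine ⟨WithLp.toLp 2 (Fin.cons (Real.sqrt (1 - ∑ j, y j ^ 2)) y), ?_, ?_⟩
    · rw [mem_sphere_zero_iff_norm, EuclideanSpace.norm_eq, Fin.sum_univ_succ]
      simp [Real.sq_sqrt (sub_nonneg.2 (le_of_lt hy))]
    · ext j; simp [π]
  have hpos : 0 < volume {y : Fin m → ℝ | ∑ j, y j ^ 2 < 1} := by
    refine IsOpen.measure_pos _ (isOpen_lt (by fun_prop) continuous_const) ⟨0, by simp⟩
  have := MeasureTheory.hausdorffMeasure_pi_real (ι := Fin m)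
  rw [Fintype.card_fin] at this
  rw [← this] at hpos
  have h := hπ.hausdorffMeasure_image_le (Nat.cast_nonneg m) (sphere 0 1)
  simp only [ENNReal.coe_one, ENNReal.one_rpow, one_mul] at h
  exact hpos.trans_le ((measure_mono hsub).trans h)

/-- Integrals over spheres for the Hausdorff measure are, up to a dimensional constant, integrals
for the surface measure. -/
lemma exists_hausdorff_const (m : ℕ) : ∃ c : ℝ, 0 < c ∧ ∀ (f : ES (m + 1) → ℝ), Continuous f →
    ∀ (p : ES (m + 1)) (r : ℝ), 0 < r →
      ∫ x in sphere p r, f x ∂μH[((m + 1 : ℕ) : ℝ) - 1] = c * (r ^ m * sM (fun x => f (p + x)) r) := by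
  have hd : ((m + 1 : ℕ) : ℝ) - 1 = m := by push_cast; ring
  rw [hd]
  set T : Measure (ES (m+1)) := (μH[(m:ℝ)]).restrict (sphere 0 1) with hT
  have : IsFiniteMeasure T := ⟨by rw [hT, Measure.restrict_apply_univ]; exact hausdorff_sphere_lt_top m⟩
  have hTinv : ∀ R : ES (m+1) ≃ₗᵢ[ℝ] ES (m+1), T.map R = T := by
    intro R
    ext B hB
    rw [Measure.map_apply R.continuous.measurable hB, hT,
      Measure.restrict_apply (R.continuous.measurable hB), Measure.restrict_apply hB,
      ← R.toIsometryEquiv.hausdorffMeasure_preimage (m : ℝ) (B ∩ sphere 0 1)]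
    congr 1
    ext x; simp
  have hT1 : ∀ᵐ w ∂T, ‖w‖ = 1 := by
    rw [hT]
    filter_upwards [ae_restrict_mem isClosed_sphere.measurableSet] with w hw
    simpa using hw
  have hTpos : 0 < T.real univ := by
    rw [measureReal_def, hT, Measure.restrict_apply_univ]
    exact ENNReal.toReal_pos (hausdorff_sphere_pos m).ne' (hausdorff_sphere_lt_top m).ne
  have hSpos := sph_real_univ_pos m
  refine ⟨T.real univ / (sph (m+1)).real univ, by positivity, fun f hf p r hr => ?_⟩
  have hu := invariant_unique (sph_map (m+1)) hTinv (sph_ae_norm _) hT1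
    (f := fun w => f (p + r • w)) (by fun_prop)
  have hscale : ∫ x in sphere p r, f x ∂μH[(m:ℝ)] = r ^ m * ∫ w, f (p + r • w) ∂T := by
    have hφ : Measurable fun w : ES (m+1) => p + r • w := by fun_prop
    have hmeas : (μH[(m:ℝ)]).restrict (sphere p r)
        = (‖r‖₊ ^ (m:ℝ)) • T.map (fun w => p + r • w) := by
      ext B hB
      rw [Measure.restrict_apply hB, Measure.smul_apply, Measure.map_apply hφ hB, hT,
        Measure.restrict_apply (hφ hB), ← Measure.hausdorffMeasure_smul₀ (Nat.cast_nonneg m) hr.ne',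
        ← (IsometryEquiv.addLeft p).hausdorffMeasure_image _ (r • _)]
      congr 1
      ext x
      simp only [mem_inter_iff, mem_image, mem_smul_set, mem_preimage, IsometryEquiv.addLeft_apply,
        mem_sphere_iff_norm, sub_zero]
      constructor
      · rintro ⟨hx, hxr⟩
        refine ⟨x - p, ⟨r⁻¹ • (x - p), ⟨?_, ?_⟩, ?_⟩, by simp⟩
        · rw [smul_inv_smul₀ hr.ne']; simpa using hx
        · rw [norm_smul, hxr, norm_inv, Real.norm_of_nonneg hr.le, inv_mul_cancel₀ hr.ne']
        · rw [smul_inv_smul₀ hr.ne']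
      · rintro ⟨_, ⟨w, ⟨hw, hw1⟩, rfl⟩, rfl⟩
        exact ⟨hw, by simp [norm_smul, hw1, abs_of_pos hr]⟩
    rw [hmeas, integral_smul_nnreal_measure, integral_map hφ.aemeasurable hf.aestronglyMeasurable,
      NNReal.smul_def, smul_eq_mul]
    congr 1
    simp [abs_of_pos hr]
  rw [hscale, sM]
  field_simp
  exact hu

open scoped ContDiff

/-! ### Partial derivatives, spherical means and rotations -/

/-- Partial derivative in the direction of the `i`-th basis vector. -/
def pd {n : ℕ} (i : Fin n) (f : ES n → ℝ) (x : ES n) : ℝ :=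
  fderiv ℝ f x (EuclideanSpace.single i 1)

/-- The Laplacian as a sum of iterated partial derivatives. -/
def lap {n : ℕ} (f : ES n → ℝ) (x : ES n) : ℝ := ∑ i, pd i (pd i f) x

/-- The Euler field `x · ∇f`. -/
def eul {n : ℕ} (f : ES n → ℝ) (x : ES n) : ℝ := fderiv ℝ f x x

lemma fderiv_eq_sum {n : ℕ} (f : ES n → ℝ) (x y : ES n) :
    fderiv ℝ f x y = ∑ i, y i * pd i f x := by
  have hy : y = ∑ i, y i • EuclideanSpace.single i (1 : ℝ) := by
    ext j
    simp [Finset.sum_apply, Pi.single_apply]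
  conv_lhs => rw [hy]
  simp [pd, map_sum]

lemma eul_eq_sum {n : ℕ} (f : ES n → ℝ) (x : ES n) : eul f x = ∑ i, x i * pd i f x :=
  fderiv_eq_sum f x x

lemma pd_contDiff {n : ℕ} {f : ES n → ℝ} {k l : WithTop ℕ∞} (hf : ContDiff ℝ k f) (h : l + 1 ≤ k)
    (i : Fin n) : ContDiff ℝ l (pd i f) :=
  (hf.fderiv_right h).clm_apply contDiff_const

lemma pd_mul {n : ℕ} {f g : ES n → ℝ} (hf : ContDiff ℝ 1 f) (hg : ContDiff ℝ 1 g) (i : Fin n)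
    (x : ES n) : pd i (fun y => f y * g y) x = f x * pd i g x + g x * pd i f x := by
  have := fderiv_fun_mul (hf.differentiable one_ne_zero x) (hg.differentiable one_ne_zero x)
  simp [pd, this]

lemma pd_add {n : ℕ} {f g : ES n → ℝ} (hf : ContDiff ℝ 1 f) (hg : ContDiff ℝ 1 g) (i : Fin n)
    (x : ES n) : pd i (fun y => f y + g y) x = pd i f x + pd i g x := by
  have := fderiv_fun_add (hf.differentiable one_ne_zero x) (hg.differentiable one_ne_zero x)
  simp [pd, this]

lemma pd_const_mul {n : ℕ} {f : ES n → ℝ} (hf : ContDiff ℝ 1 f) (c : ℝ) (i : Fin n)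
    (x : ES n) : pd i (fun y => c * f y) x = c * pd i f x := by
  have := fderiv_const_mul (hf.differentiable one_ne_zero x) c
  simp [pd, this]

lemma pd_coord {n : ℕ} (i j : Fin n) (x : ES n) :
    pd i (fun y : ES n => y j) x = if i = j then 1 else 0 := by
  have : (fun y : ES n => y j) = (EuclideanSpace.proj j : ES n →L[ℝ] ℝ) := by ext; simp
  rw [pd, this, ContinuousLinearMap.fderiv]
  simp [eq_comm]

lemma coord_contDiff {n : ℕ} {k : WithTop ℕ∞} (j : Fin n) : ContDiff ℝ k (fun y : ES n => y j) :=
  (EuclideanSpace.proj j : ES n →L[ℝ] ℝ).contDiff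

lemma pd_comp_smul {n : ℕ} {f : ES n → ℝ} (hf : ContDiff ℝ 1 f) (s : ℝ) (i : Fin n) (x : ES n) :
    pd i (fun y => f (s • y)) x = s * pd i f (s • x) := by
  have h1 : HasFDerivAt (fun y : ES n => s • y) (s • ContinuousLinearMap.id ℝ (ES n)) x :=
    (hasFDerivAt_id x).const_smul s
  have h2 := (hf.differentiable one_ne_zero (s • x)).hasFDerivAt.comp x h1
  have h3 := h2.fderiv
  simp only [Function.comp_def] at h3
  simp [pd, h3]

lemma sph_eq_restrict (n : ℕ) : sph n = (sph n).restrict (closedBall 0 1) := by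
  refine (Measure.restrict_eq_self_of_ae_mem ?_).symm
  filter_upwards [sph_ae_norm n] with w hw
  simp [hw]

lemma sM_continuous {n : ℕ} {f : ES n → ℝ} (hf : Continuous f) : Continuous (sM f) := by
  unfold sM
  rw [sph_eq_restrict]
  refine continuous_parametric_integral_of_continuous (f := fun (s : ℝ) w => f (s • w)) ?_
    (isCompact_closedBall _ _)
  fun_prop

lemma sM_deriv {n : ℕ} {f : ES n → ℝ} (hf : ContDiff ℝ 1 f) (s : ℝ) :
    HasDerivAt (sM f) (∫ w, fderiv ℝ f (s • w) w ∂(sph n)) s := by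
  have hc : Continuous fun p : ℝ × ES n => fderiv ℝ f (p.1 • p.2) p.2 :=
    ((hf.continuous_fderiv one_ne_zero).comp (by fun_prop)).clm_apply continuous_snd
  obtain ⟨C, hC⟩ := ((isCompact_closedBall s 1).prod (isCompact_closedBall (0 : ES n) 1)).exists_bound_of_continuousOn
    hc.continuousOn
  refine (hasDerivAt_integral_of_dominated_loc_of_deriv_le (bound := fun _ => C)
    (F := fun (t : ℝ) w => f (t • w)) (F' := fun (t : ℝ) w => fderiv ℝ f (t • w) w)
    (ball_mem_nhds s one_pos) (Filter.Eventually.of_forall fun t => ?_) ?_ ?_ ?_ ?_ ?_).2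
  · exact (hf.continuous.comp (continuous_const_smul t)).aestronglyMeasurable
  · exact sM_integrable hf.continuous s
  · exact (hc.comp (by fun_prop : Continuous fun w : ES n => (s, w))).aestronglyMeasurable
  · filter_upwards [sph_ae_norm n] with w hw t ht
    exact hC (t, w) ⟨ball_subset_closedBall ht, by simp [hw]⟩
  · exact integrable_const _
  · filter_upwards with w t ht
    have h1 : HasDerivAt (fun t : ℝ => t • w) w t := by
      simpa using (hasDerivAt_id t).smul_const w
    exact (hf.differentiable one_ne_zero (t • w)).hasFDerivAt.comp_hasDerivAt t h1

lemma sM_deriv_eul {n : ℕ} {f : ES n → ℝ} (hf : ContDiff ℝ 1 f) {s : ℝ} (hs : s ≠ 0) :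
    HasDerivAt (sM f) (sM (eul f) s / s) s := by
  convert sM_deriv hf s using 1
  rw [div_eq_iff hs, ← integral_mul_const]
  unfold sM eul
  congr 1; ext w
  rw [map_smul, smul_eq_mul, mul_comm]

/-- Rotation by the angle `a` in the plane of the `i`-th and `j`-th coordinates. -/
def rot {n : ℕ} (i j : Fin n) (hij : i ≠ j) (a : ℝ) : ES n →ₗᵢ[ℝ] ES n where
  toFun x := x + (((Real.cos a - 1) * x i - Real.sin a * x j) • EuclideanSpace.single i (1 : ℝ)
    + ((Real.cos a - 1) * x j + Real.sin a * x i) • EuclideanSpace.single j (1 : ℝ))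
  map_add' x y := by
    simp only [PiLp.add_apply]
    module
  map_smul' c x := by
    simp only [PiLp.smul_apply, smul_eq_mul, RingHom.id_apply]
    module
  norm_map' x := by
    rw [← sq_eq_sq₀ (norm_nonneg _) (norm_nonneg _)]
    have h : ∀ z : ES n, ‖z‖ ^ 2 = ⟪z, z⟫ := fun z => (real_inner_self_eq_norm_sq z).symm
    have hne : (EuclideanSpace.single j (1:ℝ) : ES n) i = 0 := by simp [hij]
    have hne' : (EuclideanSpace.single i (1:ℝ) : ES n) j = 0 := by simp [hij.symm]
    rw [h, h]
    simp only [LinearMap.coe_mk, AddHom.coe_mk, inner_add_left, inner_add_right, inner_smul_left, inner_smul_right,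
      EuclideanSpace.inner_single_left, EuclideanSpace.inner_single_right, hne, hne']
    simp
    linear_combination (x i ^ 2 + x j ^ 2) * Real.sin_sq_add_cos_sq a

/-- Infinitesimal rotation invariance of the surface measure, obtained by differentiating
`a ↦ ∫ f (rot a w) dσ(w)`, a constant, at `a = 0`. -/
lemma sph_rot {n : ℕ} {i j : Fin n} (hij : i ≠ j) {f : ES n → ℝ} (hf : ContDiff ℝ 1 f) :
    ∫ w, (w i * pd j f w - w j * pd i f w) ∂(sph n) = 0 := by
  set X : ℝ → ES n → ES n := fun a x =>
    ((-Real.sin a) * x i - Real.cos a * x j) • EuclideanSpace.single i (1 : ℝ)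
    + ((-Real.sin a) * x j + Real.cos a * x i) • EuclideanSpace.single j (1 : ℝ) with hX
  have hrot : ∀ a x, rot i j hij a x = x + (((Real.cos a - 1) * x i - Real.sin a * x j) • EuclideanSpace.single i (1 : ℝ)
    + ((Real.cos a - 1) * x j + Real.sin a * x i) • EuclideanSpace.single j (1 : ℝ)) := fun a x => rfl
  have hrc : Continuous fun p : ℝ × ES n => rot i j hij p.1 p.2 := by
    simp_rw [hrot]; fun_prop
  have hXc : Continuous fun p : ℝ × ES n => X p.1 p.2 := by
    simp only [hX]; fun_prop
  have hc : Continuous fun p : ℝ × ES n => fderiv ℝ f (rot i j hij p.1 p.2) (X p.1 p.2) :=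
    ((hf.continuous_fderiv one_ne_zero).comp hrc).clm_apply hXc
  obtain ⟨C, hC⟩ := ((isCompact_closedBall (0:ℝ) 1).prod (isCompact_closedBall (0 : ES n) 1)).exists_bound_of_continuousOn
    hc.continuousOn
  have hder := (hasDerivAt_integral_of_dominated_loc_of_deriv_le (bound := fun _ => C) (μ := sph n)
    (F := fun (t : ℝ) w => f (rot i j hij t w))
    (F' := fun (t : ℝ) w => fderiv ℝ f (rot i j hij t w) (X t w)) (x₀ := 0)
    (ball_mem_nhds 0 one_pos) (Filter.Eventually.of_forall fun t => ?_) ?_ ?_ ?_ ?_ ?_).2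
  · have hconst : (fun t => ∫ w, f (rot i j hij t w) ∂(sph n)) = fun _ => ∫ w, f w ∂(sph n) := by
      ext t
      exact sph_integral_comp n ((rot i j hij t).toLinearIsometryEquiv rfl) f
    rw [hconst] at hder
    have h0 := hder.unique (hasDerivAt_const _ _)
    rw [← h0]
    congr 1; ext w
    have : rot i j hij 0 w = w := by simp [hrot]
    rw [this]
    simp [hX, pd]
    ring
  · exact (hf.continuous.comp (rot i j hij t).continuous).aestronglyMeasurable
  · exact sph_integrable (hf.continuous.comp (rot i j hij 0).continuous)
  · exact (hc.comp (by fun_prop : Continuous fun w : ES n => ((0:ℝ), w))).aestronglyMeasurable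
  · filter_upwards [sph_ae_norm n] with w hw t ht
    exact hC (t, w) ⟨ball_subset_closedBall ht, by simp [hw]⟩
  · exact integrable_const _
  · filter_upwards with w t ht
    have h1 : HasDerivAt (fun t : ℝ => rot i j hij t w) (X t w) t := by
      simp_rw [hrot]
      refine HasDerivAt.const_add w (HasDerivAt.add (HasDerivAt.smul_const ?_ _) (HasDerivAt.smul_const ?_ _))
      · exact (((Real.hasDerivAt_cos t).sub_const 1).mul_const _).sub ((Real.hasDerivAt_sin t).mul_const _)
      · exact (((Real.hasDerivAt_cos t).sub_const 1).mul_const _).add ((Real.hasDerivAt_sin t).mul_const _)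
    exact (hf.differentiable one_ne_zero _).hasFDerivAt.comp_hasDerivAt t h1

/-! ### Divergence theorem and Green identities on balls -/

/-- The divergence theorem on the sphere, in infinitesimal form. It follows by applying `sph_rot`
to the functions `w j * V i w` and summing over `i` and `j`. -/
lemma sph_div {m : ℕ} {V : Fin (m + 1) → ES (m + 1) → ℝ} (hV : ∀ i, ContDiff ℝ 1 (V i)) :
    ∫ w, ∑ i, (m * (w i * V i w) + w i * fderiv ℝ (V i) w w - pd i (V i) w) ∂(sph (m + 1)) = 0 := by
  have hVc : ∀ i, Continuous (V i) := fun i => (hV i).continuous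
  have hpc : ∀ i j, Continuous (pd j (V i)) := fun i j => (pd_contDiff (l := 0) (hV i) (by simp) j).continuous
  have key : ∀ i j, ∫ w, (w i * V i w + w i * w j * pd j (V i) w - w j ^ 2 * pd i (V i) w) ∂(sph (m+1))
      = if i = j then ∫ w, w i * V i w ∂(sph (m+1)) else 0 := by
    intro i j
    split_ifs with h
    · subst h
      congr 1; ext w; ring
    · rw [← sph_rot h (f := fun w => w j * V i w) ((coord_contDiff j).mul (hV i))]
      congr 1; ext w
      rw [pd_mul (coord_contDiff j) (hV i), pd_mul (coord_contDiff j) (hV i), pd_coord, pd_coord]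
      simp [h]
      ring
  have hintg : ∀ i j, Integrable (fun w : ES (m+1) => w i * V i w + w i * w j * pd j (V i) w - w j ^ 2 * pd i (V i) w) (sph (m+1)) := by
    intro i j
    have := hVc i; have := hpc i j; have := hpc i i
    exact sph_integrable (by fun_prop)
  have hintg2 : ∀ i, Integrable (fun w : ES (m+1) => w i * V i w) (sph (m+1)) := by
    intro i
    have := hVc i
    exact sph_integrable (by fun_prop)
  have hsum : ∑ i, ∑ j, ∫ w, (w i * V i w + w i * w j * pd j (V i) w - w j ^ 2 * pd i (V i) w) ∂(sph (m+1))
      = ∑ i, ∫ w, w i * V i w ∂(sph (m+1)) := by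
    simp [key]
  rw [← integral_finsetSum _ fun i _ => hintg2 i] at hsum
  simp_rw [← integral_finsetSum _ fun j _ => hintg _ j] at hsum
  rw [← integral_finsetSum _ fun i _ => integrable_finsetSum _ fun j _ => hintg i j] at hsum
  rw [← sub_eq_zero, ← integral_sub
    (integrable_finsetSum _ fun i _ => integrable_finsetSum _ fun j _ => hintg i j)
    (integrable_finsetSum _ fun i _ => hintg2 i)] at hsum
  rw [← hsum]
  refine integral_congr_ae ?_
  filter_upwards [sph_ae_norm (m+1)] with w hw
  rw [← Finset.sum_sub_distrib]
  refine Finset.sum_congr rfl fun i _ => ?_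
  have hw2 : ∑ j, w j ^ 2 = 1 := by
    have := EuclideanSpace.norm_sq_eq w
    rw [hw] at this
    simpa using this.symm
  rw [Finset.sum_sub_distrib, Finset.sum_add_distrib, ← Finset.sum_mul _ _ (pd i (V i) w), hw2, fderiv_eq_sum]
  simp only [Finset.sum_const, Finset.card_univ, Fintype.card_fin, nsmul_eq_mul, Finset.mul_sum, mul_assoc]
  push_cast
  ring

/-- Divergence theorem on balls centered at the origin: by `sph_div`, both sides have the same
derivative in `s`. -/
lemma div_thm {m : ℕ} {V : Fin (m + 1) → ES (m + 1) → ℝ} (hV : ∀ i, ContDiff ℝ 1 (V i)) {s : ℝ}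
    (hs : 0 ≤ s) :
    ∫ x in ball 0 s, ∑ i, pd i (V i) x = s ^ m * ∫ w, ∑ i, w i * V i (s • w) ∂(sph (m + 1)) := by
  have hVc : ∀ i, Continuous (V i) := fun i => (hV i).continuous
  have hpc : ∀ i, Continuous (pd i (V i)) := fun i => (pd_contDiff (l := 0) (hV i) (by simp) i).continuous
  have hdc : Continuous fun x => ∑ i, pd i (V i) x := by fun_prop
  set b : ℝ → ℝ := fun t => ∫ w, ∑ i, w i * V i (t • w) ∂(sph (m + 1)) with hb
  have hbc : Continuous b := by
    simp only [hb]
    rw [sph_eq_restrict]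
    refine continuous_parametric_integral_of_continuous (f := fun (s : ℝ) w => ∑ i, w i * V i (s • w)) ?_
      (isCompact_closedBall _ _)
    fun_prop
  set F : ES (m+1) → ℝ := fun x => ∑ i, x i * V i x with hF
  have hFc : ContDiff ℝ 1 F := ContDiff.sum fun i _ => (coord_contDiff i).mul (hV i)
  have hFb : ∀ t, sM F t = t * b t := by
    intro t
    simp only [sM, hF, hb]
    rw [← integral_const_mul]
    congr 1; ext w
    rw [Finset.mul_sum]
    refine Finset.sum_congr rfl fun i _ => ?_
    simp [mul_assoc]
  have hFe : ∀ x, eul F x = F x + ∑ i, x i * fderiv ℝ (V i) x x := by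
    intro x
    have hd : HasFDerivAt F (∑ i, (x i • fderiv ℝ (V i) x + V i x • (EuclideanSpace.proj i : ES (m+1) →L[ℝ] ℝ))) x := by
      simp only [hF]
      refine HasFDerivAt.fun_sum fun i _ => ?_
      exact ((EuclideanSpace.proj i : ES (m+1) →L[ℝ] ℝ).hasFDerivAt).mul ((hV i).differentiable one_ne_zero x).hasFDerivAt
    rw [eul, hd.fderiv]
    simp only [hF, ← Finset.sum_add_distrib, _root_.sum_apply]
    refine Finset.sum_congr rfl fun i _ => ?_
    simp
    ring
  have hbd : ∀ t, 0 < t → HasDerivAt (fun t => t ^ m * b t) (t ^ m * sM (fun x => ∑ i, pd i (V i) x) t) t := by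
    intro t ht
    have h1 := (sM_deriv_eul hFc ht.ne').div (hasDerivAt_id t) ht.ne'
    have h2 := (hasDerivAt_pow m t).mul h1
    have h3 := sph_div (V := fun i x => V i (t • x)) fun i => (hV i).comp (contDiff_const_smul t)
    have h4 : m * b t + (sM (eul F) t - sM F t) / t - t * sM (fun x => ∑ i, pd i (V i) x) t = 0 := by
      rw [← h3]
      have e1 : (sM (eul F) t - sM F t) / t = ∫ w, ∑ i, w i * fderiv ℝ (V i) (t • w) (t • w) ∂(sph (m+1)) := by
        rw [div_eq_iff ht.ne', sM, sM, ← integral_sub, ← integral_mul_const]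
        · congr 1; ext w
          rw [hFe]; simp [Finset.sum_mul]
          refine Finset.sum_congr rfl fun i _ => by ring
        · exact sM_integrable ((hFc.continuous_fderiv one_ne_zero).clm_apply continuous_id) t
        · exact sM_integrable hFc.continuous t
      rw [e1, sM, ← integral_const_mul, ← integral_const_mul, ← integral_add, ← integral_sub]
      · congr 1; ext w
        rw [Finset.mul_sum, Finset.mul_sum, ← Finset.sum_add_distrib, ← Finset.sum_sub_distrib]
        refine Finset.sum_congr rfl fun i _ => ?_
        rw [pd_comp_smul (hV i)]
        congr 3
        have hh := (((hV i).differentiable one_ne_zero (t • w)).hasFDerivAt.comp w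
          ((hasFDerivAt_id w).const_smul t)).fderiv
        simp only [Function.comp_def] at hh
        rw [hh]; simp
      · refine Integrable.add ?_ ?_ <;> refine sph_integrable ?_
        · fun_prop
        · refine continuous_finsetSum _ fun i _ => Continuous.mul (by fun_prop) ?_
          exact (((hV i).continuous_fderiv one_ne_zero).comp (continuous_const_smul t)).clm_apply (by fun_prop)
      · exact sph_integrable (by fun_prop)
      · exact sph_integrable (by fun_prop)
      · refine sph_integrable ?_
        refine continuous_finsetSum _ fun i _ => Continuous.mul (by fun_prop) ?_
        exact (((hV i).continuous_fderiv one_ne_zero).comp (continuous_const_smul t)).clm_apply (by fun_prop)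
    have h5 : HasDerivAt (fun t => t ^ m * b t) _ t := h2.congr_of_eventuallyEq (by
      filter_upwards [lt_mem_nhds ht] with y hy
      simp [hFb, hy.ne'])
    convert h5 using 1
    have h6 : (m:ℝ) * t ^ (m-1) * t = m * t ^ m := by
      cases m with
      | zero => simp
      | succ k => simp [pow_succ]; ring
    simp only [Pi.div_apply, id, mul_one]
    rw [hFb] at h4 ⊢
    have h7 : sM (fun x => ∑ i, pd i (V i) x) t = (m * b t + (sM (eul F) t - t * b t) / t) / t := by
      field_simp at h4 ⊢
      linarith
    rw [h7]
    field_simp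
    linear_combination (-(b t * t)) * h6
  rw [polar hdc hs, intervalIntegral.integral_eq_sub_of_hasDerivAt_of_le hs (f := fun t => t ^ m * b t)]
  · have hb0 : b 0 = 0 := by
      have := sph_integral_comp (m+1) (LinearIsometryEquiv.neg ℝ) (fun w => ∑ i, w i * V i 0)
      simp only [LinearIsometryEquiv.coe_neg, PiLp.neg_apply, neg_mul, Finset.sum_neg_distrib, integral_neg] at this
      simp only [hb, zero_smul]
      linarith
    show s ^ m * b s - 0 ^ m * b 0 = s ^ m * b s
    rw [hb0]; ring
  · fun_prop
  · exact fun t ht => hbd t ht.1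
  · have := sM_continuous hdc
    exact Continuous.intervalIntegrable (by fun_prop) _ _

/-- Green identity for a harmonic `g`. The factor `s` on the left accounts for the use of the Euler
field, which is `s` times the normal derivative on the sphere of radius `s`. -/
lemma green {m : ℕ} {f g : ES (m + 1) → ℝ} (hf : ContDiff ℝ 1 f) (hg : ContDiff ℝ 2 g) {s : ℝ}
    (hs : 0 ≤ s) (hl : ∀ x ∈ ball 0 s, lap g x = 0) :
    s * ∫ x in ball 0 s, ∑ i, pd i f x * pd i g x = s ^ m * sM (fun x => f x * eul g x) s := by
  have hpg : ∀ i, ContDiff ℝ 1 (pd i g) := fun i => pd_contDiff hg (by norm_num) i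
  have h := div_thm (V := fun i x => f x * pd i g x) (fun i => hf.mul (hpg i)) hs
  have e : ∫ x in ball 0 s, ∑ i, pd i (fun x => f x * pd i g x) x
      = ∫ x in ball 0 s, ∑ i, pd i f x * pd i g x := by
    refine setIntegral_congr_fun measurableSet_ball fun x hx => ?_
    have := hl x hx
    simp only [pd_mul hf (hpg _)]
    rw [Finset.sum_add_distrib, ← Finset.mul_sum]
    rw [lap] at this
    rw [this, mul_zero, zero_add]
    exact Finset.sum_congr rfl fun i _ => mul_comm _ _
  rw [← e, h, sM, ← mul_assoc, mul_comm s, mul_assoc, ← integral_const_mul]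
  congr 2; ext w
  rw [eul_eq_sum, Finset.mul_sum, Finset.mul_sum]
  refine Finset.sum_congr rfl fun i _ => ?_
  simp
  ring

/-- `f` is smooth on the whole space and harmonic on the ball of radius `R` about the origin. -/
def Hm {n : ℕ} (f : ES n → ℝ) (R : ℝ) : Prop := ContDiff ℝ ∞ f ∧ ∀ x ∈ ball 0 R, lap f x = 0

section
variable {n : ℕ} {f g : ES n → ℝ}

lemma smooth_one (hf : ContDiff ℝ ∞ f) : ContDiff ℝ 1 f := hf.of_le (by exact_mod_cast le_top)
lemma smooth_two (hf : ContDiff ℝ ∞ f) : ContDiff ℝ 2 f :=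
  hf.of_le (WithTop.coe_le_coe.2 le_top)
lemma smooth_pd (hf : ContDiff ℝ ∞ f) (i : Fin n) : ContDiff ℝ ∞ (pd i f) :=
  pd_contDiff hf (by simp) i
lemma smooth_eul (hf : ContDiff ℝ ∞ f) : ContDiff ℝ ∞ (eul f) :=
  (hf.fderiv_right (m := ∞) (by simp)).clm_apply contDiff_id

lemma pd_comm (hf : ContDiff ℝ ∞ f) (i j : Fin n) (x : ES n) : pd i (pd j f) x = pd j (pd i f) x := by
  have h1 : ∀ k x, fderiv ℝ (pd k f) x = (fderiv ℝ (fderiv ℝ f) x).flip (EuclideanSpace.single k 1) := by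
    intro k x
    have hd : DifferentiableAt ℝ (fderiv ℝ f) x :=
      ((smooth_two hf).fderiv_right (m := 1) (by norm_num)).differentiable one_ne_zero x
    have := fderiv_clm_apply hd (differentiableAt_const (EuclideanSpace.single k (1:ℝ)))
    have hpd : pd k f = fun y => fderiv ℝ f y (EuclideanSpace.single k 1) := rfl
    rw [hpd]
    simpa using this
  have hs : IsSymmSndFDerivAt ℝ f x :=
    (smooth_two hf).contDiffAt.isSymmSndFDerivAt (by simp)
  simp only [pd.eq_1 _ (pd _ _), h1]
  simp only [ContinuousLinearMap.flip_apply]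
  exact hs _ _

lemma pd_sum {ι : Type*} (s : Finset ι) {F : ι → ES n → ℝ} (hF : ∀ k ∈ s, ContDiff ℝ 1 (F k)) (i : Fin n)
    (x : ES n) : pd i (fun y => ∑ k ∈ s, F k y) x = ∑ k ∈ s, pd i (F k) x := by
  have := fderiv_fun_sum (u := s) (A := F) (x := x) fun k hk => (hF k hk).differentiable one_ne_zero x
  simp [pd, this]

lemma pd_eul (hf : ContDiff ℝ ∞ f) (j : Fin n) (x : ES n) :
    pd j (eul f) x = eul (pd j f) x + pd j f x := by
  have : eul f = fun x => ∑ i, x i * pd i f x := funext (eul_eq_sum f)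
  rw [this, pd_sum _ fun k _ => (coord_contDiff k).mul (smooth_one (smooth_pd hf k))]
  simp_rw [pd_mul (coord_contDiff _) (smooth_one (smooth_pd hf _)), pd_coord, pd_comm hf j]
  rw [Finset.sum_add_distrib, ← eul_eq_sum]
  simp

lemma pd_congr_nhds {x : ES n} (h : f =ᶠ[nhds x] g) (i : Fin n) : pd i f x = pd i g x := by
  simp [pd, h.fderiv_eq]

lemma lap_pd (hf : ContDiff ℝ ∞ f) (j : Fin n) (x : ES n) : lap (pd j f) x = pd j (lap f) x := by
  have : lap f = fun x => ∑ i, pd i (pd i f) x := rfl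
  rw [this, pd_sum _ fun k _ => smooth_one (smooth_pd (smooth_pd hf k) k), lap]
  refine Finset.sum_congr rfl fun i _ => ?_
  rw [pd_comm (smooth_pd hf i) j i]
  have : pd i (pd j f) = pd j (pd i f) := funext (pd_comm hf i j)
  rw [this]

lemma Hm.pd {R : ℝ} (hf : Hm f R) (j : Fin n) : Hm (pd j f) R := by
  refine ⟨smooth_pd hf.1 j, fun x hx => ?_⟩
  rw [lap_pd hf.1, pd_congr_nhds (g := fun _ => 0)]
  · simp [_root_.pd]
  · filter_upwards [isOpen_ball.mem_nhds hx] with y hy using hf.2 y hy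

lemma Hm.eul {R : ℝ} (hf : Hm f R) : Hm (eul f) R := by
  refine ⟨smooth_eul hf.1, fun x hx => ?_⟩
  have h1 : ∀ i, _root_.pd i (_root_.eul f) = fun x => _root_.eul (_root_.pd i f) x + _root_.pd i f x := fun i => funext (pd_eul hf.1 i)
  simp only [lap, h1]
  have hs := fun i => smooth_pd hf.1 i
  simp_rw [pd_add (smooth_one (smooth_eul (hs _))) (smooth_one (hs _)), pd_eul (hs _)]
  simp only [Finset.sum_add_distrib]
  have h2 := hf.2 x hx
  have h3 : ∑ i, _root_.eul (_root_.pd i (_root_.pd i f)) x = 0 := by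
    simp_rw [eul_eq_sum]
    rw [Finset.sum_comm]
    refine Finset.sum_eq_zero fun j _ => ?_
    rw [← Finset.mul_sum]
    have := pd_sum Finset.univ (fun k _ => smooth_one (smooth_pd (hs k) k)) j x
    rw [← this]
    have h4 := (hf.pd j).2 x hx
    rw [lap_pd hf.1] at h4
    unfold lap at h4
    rw [h4, mul_zero]
  rw [lap] at h2
  rw [h3, h2]; simp

lemma lap_add (hf : ContDiff ℝ ∞ f) (hg : ContDiff ℝ ∞ g) (x : ES n) :
    lap (fun y => f y + g y) x = lap f x + lap g x := by
  have h1 : ∀ i, pd i (fun y => f y + g y) = fun x => pd i f x + pd i g x :=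
    fun i => funext (pd_add (smooth_one hf) (smooth_one hg) i)
  simp only [lap, h1]
  simp_rw [pd_add (smooth_one (smooth_pd hf _)) (smooth_one (smooth_pd hg _))]
  rw [Finset.sum_add_distrib]

lemma lap_const_mul (hf : ContDiff ℝ ∞ f) (c : ℝ) (x : ES n) :
    lap (fun y => c * f y) x = c * lap f x := by
  have h1 : ∀ i, pd i (fun y => c * f y) = fun x => c * pd i f x :=
    fun i => funext (pd_const_mul (smooth_one hf) c i)
  simp only [lap, h1]
  simp_rw [pd_const_mul (smooth_one (smooth_pd hf _))]
  rw [Finset.mul_sum]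

lemma Hm.add {R : ℝ} (hf : Hm f R) (hg : Hm g R) : Hm (fun y => f y + g y) R :=
  ⟨hf.1.add hg.1, fun x hx => by rw [lap_add hf.1 hg.1, hf.2 x hx, hg.2 x hx, add_zero]⟩

lemma Hm.const_mul {R : ℝ} (hf : Hm f R) (c : ℝ) : Hm (fun y => c * f y) R :=
  ⟨contDiff_const.mul hf.1, fun x hx => by rw [lap_const_mul hf.1, hf.2 x hx, mul_zero]⟩

lemma Hm.neg_arg {R : ℝ} (hf : Hm f R) : Hm (fun y => f (-y)) R := by
  have h0 : ∀ {h : ES n → ℝ}, ContDiff ℝ ∞ h → ∀ i, _root_.pd i (fun y => h (-y)) = fun y => (-1) * _root_.pd i h (-y) := by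
    intro h hh i; ext y
    have := pd_comp_smul (smooth_one hh) (-1) i y
    simpa using this
  refine ⟨hf.1.comp contDiff_neg, fun x hx => ?_⟩
  have := hf.2 (-x) (by simpa using hx)
  simp only [lap, h0 hf.1]
  have h1 : ∀ i, _root_.pd i (fun y => -1 * _root_.pd i f (-y)) x
      = _root_.pd i (_root_.pd i f) (-x) := by
    intro i
    have h2 : ContDiff ℝ 1 (fun y => _root_.pd i f (-y)) :=
      smooth_one ((smooth_pd hf.1 i).comp contDiff_neg)
    rw [pd_const_mul h2, h0 (smooth_pd hf.1 i)]
    ring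
  simp only [h1]
  exact this

lemma pd_translate (p : ES n) (i : Fin n) (x : ES n) : pd i (fun y => f (p + y)) x = pd i f (p + x) := by
  simp only [pd]
  rw [fderiv_comp_add_left]

lemma lap_translate (p : ES n) (x : ES n) : lap (fun y => f (p + y)) x = lap f (p + x) := by
  have : ∀ h : ES n → ℝ, ∀ i, pd i (fun y => h (p + y)) = fun y => pd i h (p + y) := fun h i =>
    funext fun x => pd_translate p i x
  simp only [lap, this]

lemma Hm.translate {R ρ : ℝ} (hf : Hm f R) (p : ES n) (h : ‖p‖ + ρ ≤ R) : Hm (fun y => f (p + y)) ρ := by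
  refine ⟨hf.1.comp (contDiff_const.add contDiff_id), fun x hx => ?_⟩
  rw [lap_translate]
  refine hf.2 _ ?_
  rw [mem_ball_zero_iff] at hx ⊢
  linarith [norm_add_le p x]

lemma Hm.const {R : ℝ} (c : ℝ) : Hm (fun _ : ES n => c) R := by
  refine ⟨contDiff_const, fun x hx => ?_⟩
  have : ∀ i : Fin n, _root_.pd i (fun _ : ES n => c) = fun _ => 0 := fun i => by ext y; simp [_root_.pd]
  simp only [lap, this]
  simp [_root_.pd]

lemma eul_mul_self (hf : ContDiff ℝ 1 f) (hg : ContDiff ℝ 1 g) (x : ES n) :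
    eul (fun y => f y * g y) x = f x * eul g x + g x * eul f x := by
  have := fderiv_fun_mul (hf.differentiable one_ne_zero x) (hg.differentiable one_ne_zero x)
  simp [eul, this]

lemma eul_add (hf : ContDiff ℝ 1 f) (hg : ContDiff ℝ 1 g) (x : ES n) :
    eul (fun y => f y + g y) x = eul f x + eul g x := by
  have := fderiv_fun_add (hf.differentiable one_ne_zero x) (hg.differentiable one_ne_zero x)
  simp [eul, this]

lemma eul_const_mul (hf : ContDiff ℝ 1 f) (c : ℝ) (x : ES n) :
    eul (fun y => c * f y) x = c * eul f x := by
  have := fderiv_const_mul (hf.differentiable one_ne_zero x) c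
  simp [eul, this]

lemma eul_neg_arg (hf : ContDiff ℝ 1 f) (x : ES n) : eul (fun y => f (-y)) x = eul f (-x) := by
  have h2 := (hf.differentiable one_ne_zero (-x)).hasFDerivAt.comp x (hasFDerivAt_id x).neg
  have h3 := h2.fderiv
  simp only [Function.comp_def] at h3
  rw [eul, eul]
  erw [h3]
  simp

end

/-! ### Parity spectral gap and the frequency function -/

section
variable {n : ℕ} {f g : ES n → ℝ}

lemma sM_mono (hf : Continuous f) (hg : Continuous g) (h : ∀ x, f x ≤ g x) (s : ℝ) :
    sM f s ≤ sM g s :=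
  integral_mono (sM_integrable hf s) (sM_integrable hg s) fun w => h (s • w)

lemma sM_add (hf : Continuous f) (hg : Continuous g) (s : ℝ) :
    sM (fun x => f x + g x) s = sM f s + sM g s :=
  integral_add (sM_integrable hf s) (sM_integrable hg s)

lemma sM_const_mul (c : ℝ) (f : ES n → ℝ) (s : ℝ) : sM (fun x => c * f x) s = c * sM f s :=
  integral_const_mul _ _

lemma sM_nonneg (h : ∀ x, 0 ≤ f x) (s : ℝ) : 0 ≤ sM f s := integral_nonneg fun w => h (s • w)

lemma sM_zero (f : ES n → ℝ) : sM f 0 = f 0 * (sph n).real univ := by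
  simp [sM, mul_comm]

lemma sM_neg_arg (f : ES n → ℝ) (s : ℝ) : sM (fun x => f (-x)) s = sM f s := by
  have := sph_integral_comp n (LinearIsometryEquiv.neg ℝ) (fun w => f (s • w))
  simpa [sM] using this

lemma cont_pd (hf : ContDiff ℝ ∞ f) (i : Fin n) : Continuous (pd i f) := (smooth_pd hf i).continuous
lemma cont_eul (hf : ContDiff ℝ ∞ f) : Continuous (eul f) := (smooth_eul hf).continuous

lemma sM_sq_deriv (hf : ContDiff ℝ ∞ f) {s : ℝ} (hs : s ≠ 0) :
    HasDerivAt (sM fun x => f x ^ 2) (2 * sM (fun x => f x * eul f x) s / s) s := by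
  have h1 := sM_deriv_eul (f := fun x => f x * f x) ((smooth_one hf).mul (smooth_one hf)) hs
  have e : eul (fun x => f x * f x) = fun x => 2 * (f x * eul f x) := by
    ext x; rw [eul_mul_self (smooth_one hf) (smooth_one hf)]; ring
  rw [e, sM_const_mul] at h1
  simpa [sq] using h1
end

section
variable {m : ℕ} {f g : ES (m + 1) → ℝ} {R : ℝ}

lemma Hm.green (hf : ContDiff ℝ ∞ f) (hg : Hm g R) {s : ℝ} (hs : 0 ≤ s) (hsR : s ≤ R) :
    s * ∫ x in ball 0 s, ∑ i, _root_.pd i f x * _root_.pd i g x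
      = s ^ m * sM (fun x => f x * _root_.eul g x) s :=
  _root_.green (smooth_one hf) (smooth_two hg.1) hs fun x hx => hg.2 x (ball_subset_ball hsR hx)

lemma Hm.symm (hf : Hm f R) (hg : Hm g R) {s : ℝ} (hs : 0 < s) (hsR : s ≤ R) :
    sM (fun x => f x * _root_.eul g x) s = sM (fun x => g x * _root_.eul f x) s := by
  have h1 := Hm.green hf.1 hg hs.le hsR
  have h2 := Hm.green hg.1 hf hs.le hsR
  have : ∀ x, ∑ i, _root_.pd i f x * _root_.pd i g x = ∑ i, _root_.pd i g x * _root_.pd i f x :=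
    fun x => Finset.sum_congr rfl fun i _ => mul_comm _ _
  simp_rw [this] at h1
  rw [h1] at h2
  exact mul_left_cancel₀ (pow_ne_zero m hs.ne') h2

lemma Hm.mul_eul_nonneg (hf : Hm f R) {s : ℝ} (hs : 0 ≤ s) (hsR : s ≤ R) :
    0 ≤ sM (fun x => f x * _root_.eul f x) s := by
  rcases hs.eq_or_lt with rfl | hs
  · rw [sM_zero]; simp [_root_.eul]
  · have h1 := Hm.green hf.1 hf hs.le hsR
    have h2 : 0 ≤ s * ∫ x in ball 0 s, ∑ i, _root_.pd i f x * _root_.pd i f x :=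
      mul_nonneg hs.le (integral_nonneg fun x => Finset.sum_nonneg fun i _ => mul_self_nonneg _)
    rw [h1] at h2
    exact nonneg_of_mul_nonneg_right h2 (pow_pos hs m)

lemma Hm.sq_mono (hf : Hm f R) : MonotoneOn (sM fun x => f x ^ 2) (Icc 0 R) := by
  have hc : Continuous (sM fun x => f x ^ 2) := sM_continuous (hf.1.continuous.pow 2)
  refine monotoneOn_of_deriv_nonneg (convex_Icc 0 R) hc.continuousOn ?_ ?_
  · rw [interior_Icc]
    exact fun s hs => (sM_sq_deriv hf.1 hs.1.ne').differentiableAt.differentiableWithinAt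
  · rw [interior_Icc]
    intro s hs
    rw [(sM_sq_deriv hf.1 hs.1.ne').deriv]
    have := hf.mul_eul_nonneg hs.1.le hs.2.le
    have := hs.1
    positivity

/-- Comparison step: the gap inequality for all first derivatives at level `a - 1` implies it
for the function at level `a`. With `g = E f - a f` one has `∂ᵢ g = (E - (a - 1)) ∂ᵢ f`, so the
Dirichlet integral of `g` dominates that of `f`; these integrals are the radial derivatives of the
mean squares of `g` and `f`, up to a common positive factor. -/
lemma gap_step (hf : Hm f R) (a : ℝ) (h0 : f 0 ^ 2 ≤ (a * f 0) ^ 2)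
    (hd : ∀ i, ∀ s ∈ Icc 0 R, sM (fun x => pd i f x ^ 2) s
      ≤ sM (fun x => (eul (pd i f) x - (a - 1) * pd i f x) ^ 2) s) :
    ∀ s ∈ Icc 0 R, sM (fun x => f x ^ 2) s ≤ sM (fun x => (eul f x - a * f x) ^ 2) s := by
  set g : ES (m+1) → ℝ := fun x => eul f x + (-a) * f x with hg
  have hgH : Hm g R := hf.eul.add (hf.const_mul _)
  have hgp : ∀ i, pd i g = fun x => eul (pd i f) x - (a - 1) * pd i f x := by
    intro i; ext x
    rw [hg, pd_add (smooth_one (smooth_eul hf.1)) (contDiff_const.mul (smooth_one hf.1)), pd_eul hf.1,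
      pd_const_mul (smooth_one hf.1)]
    ring
  have hge : ∀ s, sM (fun x => (eul f x - a * f x) ^ 2) s = sM (fun x => g x ^ 2) s := by
    intro s; congr 1; ext x; rw [hg]; ring
  have hfc := hf.1.continuous
  have hgc := hgH.1.continuous
  have hpf := fun i => cont_pd hf.1 i
  have hpg := fun i => cont_pd hgH.1 i
  have hball : ∀ s ∈ Icc 0 R, ∫ x in ball 0 s, ∑ i, pd i f x * pd i f x ≤ ∫ x in ball 0 s, ∑ i, pd i g x * pd i g x := by
    intro s hs
    have c1 : Continuous fun x => ∑ i, pd i f x * pd i f x := by fun_prop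
    have c2 : Continuous fun x => ∑ i, pd i g x * pd i g x := by fun_prop
    rw [polar c1 hs.1, polar c2 hs.1]
    have := sM_continuous c1
    have := sM_continuous c2
    refine intervalIntegral.integral_mono_on hs.1 (Continuous.intervalIntegrable (by fun_prop) _ _)
      (Continuous.intervalIntegrable (by fun_prop) _ _) fun t ht => ?_
    refine mul_le_mul_of_nonneg_left ?_ (pow_nonneg ht.1 m)
    unfold sM
    rw [integral_finsetSum, integral_finsetSum]
    · refine Finset.sum_le_sum fun i _ => ?_
      have := hd i t ⟨ht.1, ht.2.trans hs.2⟩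
      rw [hgp i]
      simpa [sM, sq] using this
    · intro i _; exact sph_integrable (by have := hpg i; fun_prop)
    · intro i _; exact sph_integrable (by have := hpf i; fun_prop)
  set Q : ℝ → ℝ := fun s => sM (fun x => g x ^ 2) s - sM (fun x => f x ^ 2) s with hQ
  have hQd : ∀ s ∈ Ioo 0 R, HasDerivAt Q (2 * sM (fun x => g x * eul g x) s / s
      - 2 * sM (fun x => f x * eul f x) s / s) s := fun s hs =>
    (sM_sq_deriv hgH.1 hs.1.ne').sub (sM_sq_deriv hf.1 hs.1.ne')
  have hQm : MonotoneOn Q (Icc 0 R) := by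
    have hc : Continuous Q := (sM_continuous (hgc.pow 2)).sub (sM_continuous (hfc.pow 2))
    refine monotoneOn_of_deriv_nonneg (convex_Icc 0 R) hc.continuousOn ?_ ?_
    · rw [interior_Icc]
      exact fun s hs => (hQd s hs).differentiableAt.differentiableWithinAt
    · rw [interior_Icc]
      intro s hs
      rw [(hQd s hs).deriv, sub_nonneg]
      have e1 := Hm.green hf.1 hf hs.1.le hs.2.le
      have e2 := Hm.green hgH.1 hgH hs.1.le hs.2.le
      have e3 := mul_le_mul_of_nonneg_left (hball s (Ioo_subset_Icc_self hs)) hs.1.le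
      rw [e1, e2] at e3
      have e4 := le_of_mul_le_mul_left e3 (pow_pos hs.1 m)
      have := hs.1
      gcongr
  intro s hs
  rw [hge]
  have h1 := hQm (left_mem_Icc.2 (hs.1.trans hs.2)) hs hs.1
  have h2 : 0 ≤ Q 0 := by
    simp only [hQ]
    rw [sM_zero, sM_zero, ← sub_mul]
    refine mul_nonneg ?_ measureReal_nonneg
    have : g 0 ^ 2 = (a * f 0) ^ 2 := by simp [hg, eul]
    rw [this]; linarith
  simp only [hQ] at h1 h2
  linarith

/-- A harmonic function vanishing at the origin has no component of homogeneity `0`, so the Euler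
field dominates it. -/
lemma gap_zero (hf : Hm f R) (h0 : f 0 = 0) :
    ∀ s ∈ Icc 0 R, sM (fun x => f x ^ 2) s ≤ sM (fun x => eul f x ^ 2) s := by
  have := gap_step hf 0 (by simp [h0]) ?_
  · simpa using this
  · intro i s hs
    have hp := hf.pd i
    have c1 := hp.1.continuous
    have c2 := cont_eul hp.1
    have e : (fun x => (eul (pd i f) x - (0 - 1) * pd i f x) ^ 2)
        = fun x => (eul (pd i f) x ^ 2 + 2 * (pd i f x * eul (pd i f) x)) + pd i f x ^ 2 := by
      ext x; ring
    rw [e, sM_add (by fun_prop) (by fun_prop), sM_add (by fun_prop) (by fun_prop), sM_const_mul]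
    have h1 := hp.mul_eul_nonneg hs.1 hs.2
    have h2 : 0 ≤ sM (fun x => eul (pd i f) x ^ 2) s := sM_nonneg (fun x => sq_nonneg _) s
    linarith

/-- Spectral gap: a harmonic function of parity opposite to that of `k` has no component of
homogeneity `k`, hence `E - k`, with `E` the Euler field, is bounded below by one on it. The proof
is by induction on `k`: a derivative lowers the homogeneity by one and flips the parity, so no
expansion into spherical harmonics is needed. -/
lemma gap_parity (k : ℕ) : ∀ {f : ES (m + 1) → ℝ}, Hm f R → (∀ x, f (-x) = (-1) ^ (k + 1) * f x) →
    ∀ s ∈ Icc 0 R, sM (fun x => f x ^ 2) s ≤ sM (fun x => (eul f x - k * f x) ^ 2) s := by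
  induction k with
  | zero =>
    intro f hf hp
    have h0 : f 0 = 0 := by
      have := hp 0
      simp at this
      linarith
    simpa using gap_zero hf h0
  | succ k ih =>
    intro f hf hp
    refine gap_step hf _ ?_ ?_
    · rw [mul_pow]
      have : (1:ℝ) ≤ ((k+1 : ℕ):ℝ) ^ 2 := by
        push_cast
        nlinarith [(Nat.cast_nonneg k : (0:ℝ) ≤ k)]
      nlinarith [sq_nonneg (f 0)]
    · intro i
      have := ih (hf.pd i) (fun x => ?_)
      · simpa using this
      · have h1 := pd_comp_smul (smooth_one hf.1) (-1) i x
        have h2 : (fun y => f ((-1:ℝ) • y)) = fun y => (-1) ^ (k + 1 + 1) * f y := by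
          ext y; rw [← hp]; simp
        rw [h2, pd_const_mul (smooth_one hf.1)] at h1
        simp only [neg_smul, one_smul] at h1
        rw [pow_succ] at h1
        linarith

/-- Almgren's frequency about the origin, in terms of spherical means; the Green identity turns the
Dirichlet energy into the numerator. The value is `0` when `f` vanishes on the sphere. -/
def fr {n : ℕ} (f : ES n → ℝ) (s : ℝ) : ℝ := sM (fun x => f x * eul f x) s / sM (fun x => f x ^ 2) s

/-- On the sphere of radius `s`, `fr f s * f` is the orthogonal projection of `eul f` on `f`. -/
lemma defect_eq (hf : ContDiff ℝ ∞ f) {s : ℝ} (h : sM (fun x => f x ^ 2) s ≠ 0) :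
    sM (fun x => (eul f x - fr f s * f x) ^ 2) s
      = sM (fun x => eul f x ^ 2) s - fr f s ^ 2 * sM (fun x => f x ^ 2) s := by
  have c1 := hf.continuous
  have c2 := cont_eul hf
  have e : (fun x => (eul f x - fr f s * f x) ^ 2)
      = fun x => (eul f x ^ 2 + (-2 * fr f s) * (f x * eul f x)) + fr f s ^ 2 * f x ^ 2 := by
    ext x; ring
  rw [e, sM_add (by fun_prop) (by fun_prop), sM_add (by fun_prop) (by fun_prop), sM_const_mul,
    sM_const_mul]
  have : sM (fun x => f x * eul f x) s = fr f s * sM (fun x => f x ^ 2) s := by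
    rw [fr, div_mul_cancel₀ _ h]
  rw [this]; ring

/-- Almgren's derivative formula: the frequency grows at the rate of the homogeneity defect. -/
lemma fr_deriv (hf : Hm f R) {s : ℝ} (hs : 0 < s) (hsR : s ≤ R) (h : sM (fun x => f x ^ 2) s ≠ 0) :
    HasDerivAt (fr f) (2 / s * sM (fun x => (eul f x - fr f s * f x) ^ 2) s
      / sM (fun x => f x ^ 2) s) s := by
  have h1 := sM_sq_deriv hf.1 hs.ne'
  have h2 := sM_deriv_eul (f := fun x => f x * eul f x)
    ((smooth_one hf.1).mul (smooth_one (smooth_eul hf.1))) hs.ne'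
  have c1 := hf.1.continuous
  have c2 := cont_eul hf.1
  have c3 := cont_eul hf.eul.1
  have e : eul (fun x => f x * eul f x) = fun x => f x * eul (eul f) x + eul f x * eul f x := by
    ext x; rw [eul_mul_self (smooth_one hf.1) (smooth_one (smooth_eul hf.1))]
  rw [e, sM_add (by fun_prop) (by fun_prop), hf.symm hf.eul hs hsR] at h2
  have h3 := h2.div h1 h
  have h4 : HasDerivAt (fr f) _ s := h3
  refine h4.congr_deriv ?_
  rw [defect_eq hf.1 h, fr]
  simp only [← sq]
  field_simp
  ring

lemma fr_mono (hf : Hm f R) {a : ℝ} (ha : 0 < a) (h : 0 < sM (fun x => f x ^ 2) a) :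
    MonotoneOn (fr f) (Icc a R) := by
  have hpos : ∀ s ∈ Icc a R, 0 < sM (fun x => f x ^ 2) s := fun s hs =>
    h.trans_le (hf.sq_mono ⟨ha.le, hs.1.trans hs.2⟩ ⟨ha.le.trans hs.1, hs.2⟩ hs.1)
  have hd : ∀ s ∈ Icc a R, HasDerivAt (fr f) _ s := fun s hs =>
    fr_deriv hf (ha.trans_le hs.1) hs.2 (hpos s hs).ne'
  refine monotoneOn_of_deriv_nonneg (convex_Icc a R)
    (fun s hs => (hd s hs).continuousAt.continuousWithinAt) ?_ ?_
  · exact fun s hs => (hd s (interior_subset hs)).differentiableAt.differentiableWithinAt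
  · intro s hs
    have hs' := interior_subset hs
    rw [(hd s hs').deriv]
    have := hpos s hs'
    have : 0 < s := ha.trans_le hs'.1
    have : 0 ≤ sM (fun x => (eul f x - fr f s * f x) ^ 2) s := sM_nonneg (fun x => sq_nonneg _) s
    positivity

/-- Frequency pinching yields a radius at which `f` is almost homogeneous, by the mean value theorem
for `fr f` on `[6r/10, 8r/10]`. Radii in this range are large enough for the interior estimate at
points of norm at most `r / 2`, and small enough that the half sphere facing such a point `a` lies
well inside `B_r(a)`. -/
lemma pinch (hf : Hm f R) {r : ℝ} (hr : 0 < r) (hrR : 3 * r / 2 ≤ R)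
    (h : 0 < sM (fun x => f x ^ 2) (r / 2)) :
    ∃ s, 6 / 10 * r < s ∧ s < 8 / 10 * r ∧ 0 < sM (fun x => f x ^ 2) s ∧
      sM (fun x => (eul f x - fr f s * f x) ^ 2) s
        ≤ 2 * sM (fun x => f x ^ 2) s * (fr f (3 * r / 2) - fr f (r / 2)) := by
  have hpos : ∀ s ∈ Icc (r/2) R, 0 < sM (fun x => f x ^ 2) s := fun s hs =>
    h.trans_le (hf.sq_mono ⟨by positivity, hs.1.trans hs.2⟩ ⟨(by positivity : 0 ≤ r/2).trans hs.1, hs.2⟩ hs.1)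
  have hd : ∀ s ∈ Icc (r/2) R, HasDerivAt (fr f) _ s := fun s hs =>
    fr_deriv hf ((by positivity : 0 < r/2).trans_le hs.1) hs.2 (hpos s hs).ne'
  have hsub : ∀ s, 6/10*r ≤ s → s ≤ 8/10*r → s ∈ Icc (r/2) R := fun s h1 h2 =>
    ⟨by linarith, by linarith⟩
  obtain ⟨s, hs, hse⟩ := exists_hasDerivAt_eq_slope (fr f) _ (show 6/10*r < 8/10*r by linarith)
    (fun s hs => (hd s (hsub s hs.1 hs.2)).continuousAt.continuousWithinAt)
    (fun s hs => hd s (hsub s hs.1.le hs.2.le))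
  have hsm := hsub s hs.1.le hs.2.le
  have hp := hpos s hsm
  refine ⟨s, hs.1, hs.2, hp, ?_⟩
  have hm := fr_mono hf (by positivity) h
  have m1 := hm ⟨le_rfl, by linarith⟩ (hsub (6/10*r) le_rfl (by linarith)) (by linarith : r/2 ≤ 6/10*r)
  have m2 := hm (hsub (8/10*r) (by linarith) le_rfl) ⟨by linarith, hrR⟩ (by linarith : 8/10*r ≤ 3*r/2)
  set S := sM (fun x => (eul f x - fr f s * f x) ^ 2) s with hS
  have hS0 : 0 ≤ S := sM_nonneg (fun x => sq_nonneg _) s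
  have hs0 : 0 < s := by linarith [hs.1]
  have e : S * (2 / s * (8/10 * r - 6/10 * r)) = sM (fun x => f x ^ 2) s * (fr f (8/10*r) - fr f (6/10*r)) := by
    have : (8/10 * r - 6/10 * r) ≠ 0 := by linarith
    rw [div_eq_div_iff hp.ne' this] at hse
    linarith
  have h5 : 1/2 ≤ 2 / s * (8/10 * r - 6/10 * r) := by
    rw [div_mul_eq_mul_div, le_div_iff₀ hs0]
    linarith [hs.2]
  have h6 : S * (1/2) ≤ S * (2 / s * (8/10 * r - 6/10 * r)) := mul_le_mul_of_nonneg_left h5 hS0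
  have h7 : sM (fun x => f x ^ 2) s * (fr f (8/10*r) - fr f (6/10*r))
      ≤ sM (fun x => f x ^ 2) s * (fr f (3 * r / 2) - fr f (r / 2)) :=
    mul_le_mul_of_nonneg_left (by linarith) hp.le
  linarith

end

/-! ### Interior estimates and the core estimate -/

section
variable {m : ℕ} {f : ES (m + 1) → ℝ} {R : ℝ}

lemma integral_ball_translate (p : ES (m + 1)) (f : ES (m + 1) → ℝ) (ρ : ℝ) :
    ∫ x in ball p ρ, f x = ∫ x in ball 0 ρ, f (p + x) := by
  have h := (measurePreserving_add_left (volume : Measure (ES (m+1))) p).setIntegral_preimage_emb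
    (measurableEmbedding_addLeft p) f (ball p ρ)
  rw [← h]
  congr 2
  ext x; simp [dist_eq_norm]

/-- Subharmonicity of `f ^ 2`: its value at `x` is at most its mean over a ball about `x`, multiplied
out by the volume of the ball. -/
lemma interior_est (hf : Hm f R) {x : ES (m + 1)} {ρ : ℝ} (hρ : 0 ≤ ρ) (h : ‖x‖ + ρ ≤ R) :
    (sph (m+1)).real univ * f x ^ 2 * (ρ ^ (m + 1) / (m + 1)) ≤ ∫ y in ball x ρ, f y ^ 2 := by
  have hg := hf.translate x h
  set g : ES (m+1) → ℝ := fun y => f (x + y)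
  have hgc : Continuous fun y => g y ^ 2 := hg.1.continuous.pow 2
  rw [integral_ball_translate x (fun y => f y ^ 2), polar hgc hρ]
  have hc := sM_continuous hgc
  have e : (sph (m+1)).real univ * f x ^ 2 * (ρ ^ (m + 1) / (m + 1))
      = ∫ t in (0:ℝ)..ρ, t ^ m * ((sph (m+1)).real univ * f x ^ 2) := by
    rw [intervalIntegral.integral_mul_const, integral_pow]
    simp; ring
  rw [e]
  refine intervalIntegral.integral_mono_on hρ (Continuous.intervalIntegrable (by fun_prop) _ _)
      (Continuous.intervalIntegrable (by fun_prop) _ _) fun t ht => ?_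
  refine mul_le_mul_of_nonneg_left ?_ (pow_nonneg ht.1 m)
  have := hg.sq_mono (left_mem_Icc.2 hρ) ht ht.1
  rw [sM_zero] at this
  simpa [g, mul_comm] using this

lemma ball_le_sM (hf : Hm f R) {s : ℝ} (hs : 0 ≤ s) (hsR : s ≤ R) :
    ∫ y in ball 0 s, f y ^ 2 ≤ sM (fun x => f x ^ 2) s * (s ^ (m + 1) / (m + 1)) := by
  have hgc : Continuous fun y => f y ^ 2 := hf.1.continuous.pow 2
  have hc := sM_continuous hgc
  have e : sM (fun x => f x ^ 2) s * (s ^ (m + 1) / (m + 1))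
      = ∫ t in (0:ℝ)..s, t ^ m * sM (fun x => f x ^ 2) s := by
    rw [intervalIntegral.integral_mul_const, integral_pow]
    simp; ring
  rw [polar hgc hs, e]
  refine intervalIntegral.integral_mono_on hs (Continuous.intervalIntegrable (by fun_prop) _ _)
      (Continuous.intervalIntegrable (by fun_prop) _ _) fun t ht => ?_
  exact mul_le_mul_of_nonneg_left (hf.sq_mono ⟨ht.1, ht.2.trans hsR⟩ ⟨hs, hsR⟩ ht.2) (pow_nonneg ht.1 m)

lemma integrableOn_ball {f : ES (m + 1) → ℝ} (hf : Continuous f) (p : ES (m + 1)) (ρ : ℝ) :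
    IntegrableOn f (ball p ρ) :=
  (hf.continuousOn.integrableOn_compact (isCompact_closedBall p ρ)).mono_set ball_subset_closedBall

lemma pointwise_le_sM (hf : Hm f R) {x : ES (m + 1)} {ρ s L : ℝ} (hρ : 0 < ρ) (h : ‖x‖ + ρ ≤ s)
    (hsR : s ≤ R) (hL : s ≤ L * ρ) :
    (sph (m+1)).real univ * f x ^ 2 ≤ L ^ (m + 1) * sM (fun x => f x ^ 2) s := by
  have hs : 0 ≤ s := by linarith [norm_nonneg x]
  have h1 := interior_est hf hρ.le (h.trans hsR)
  have h2 := ball_le_sM hf hs hsR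
  have h3 : ∫ y in ball x ρ, f y ^ 2 ≤ ∫ y in ball 0 s, f y ^ 2 := by
    refine setIntegral_mono_set (integrableOn_ball (hf.1.continuous.pow 2) 0 s)
      (Filter.Eventually.of_forall fun y => sq_nonneg _) (LE.le.eventuallyLE ?_)
    exact ball_subset_ball' (by rw [dist_zero_right]; linarith)
  have hσ : 0 ≤ sM (fun x => f x ^ 2) s := sM_nonneg (fun x => sq_nonneg _) s
  have h4 : s ^ (m+1) / (m+1) ≤ L ^ (m+1) * (ρ ^ (m+1) / (m+1)) := by
    rw [← mul_div_assoc, ← mul_pow]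
    gcongr
  have h5 := mul_le_mul_of_nonneg_left h4 hσ
  have h6 : 0 < ρ ^ (m+1) / ((m:ℝ)+1) := by positivity
  refine le_of_mul_le_mul_right ?_ h6
  linarith

lemma volume_ball_real {r : ℝ} (hr : 0 ≤ r) (p : ES (m + 1)) :
    (volume : Measure (ES (m+1))).real (ball p r) = (sph (m+1)).real univ * (r ^ (m+1) / (m+1)) := by
  have h := integral_ball_translate p (fun _ => (1:ℝ)) r
  rw [polar continuous_const hr] at h
  simp only [setIntegral_const, smul_eq_mul, mul_one] at h
  rw [h]
  simp [sM]
  ring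

/-- Interior estimate for `f - f a` in terms of its mean square on `B_r(a)`. -/
lemma pointwise_le_average (hf : Hm f R) {a y : ES (m + 1)} {r : ℝ} (hr : 0 < r) (ha : ‖a‖ + r ≤ R)
    (hy : ‖y - a‖ ≤ 95 / 100 * r) :
    (f y - f a) ^ 2 ≤ 20 ^ (m + 1) * ⨍ z in ball a r, (f z - f a) ^ 2 := by
  have hg : Hm (fun x => f x + (- f a)) R := hf.add (Hm.const _)
  have hya : ‖y‖ ≤ ‖y - a‖ + ‖a‖ := by simpa using norm_add_le (y - a) a
  have h1 := interior_est hg (x := y) (ρ := 5/100 * r) (by positivity) (by linarith)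
  simp only [← sub_eq_add_neg] at h1
  have hc := hf.1.continuous
  have h3 : ∫ z in ball y (5/100*r), (f z - f a) ^ 2 ≤ ∫ z in ball a r, (f z - f a) ^ 2 := by
    refine setIntegral_mono_set (integrableOn_ball (by fun_prop) a r)
      (Filter.Eventually.of_forall fun y => sq_nonneg _) (LE.le.eventuallyLE ?_)
    exact ball_subset_ball' (by rw [dist_eq_norm]; linarith)
  rw [setAverage_eq, volume_ball_real hr.le, smul_eq_mul]
  have hσ := sph_real_univ_pos m
  set I := ∫ z in ball a r, (f z - f a) ^ 2
  set σ := (sph (m+1)).real univ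
  rw [mul_pow, div_pow] at h1
  have h4 : σ * (f y - f a) ^ 2 * ((5/100:ℝ) ^ (m+1) * r ^ (m+1) / (m+1)) ≤ I := by
    rw [div_pow]; exact h1.trans h3
  have h5 : (20:ℝ) ^ (m+1) * (5/100) ^ (m+1) = 1 := by rw [← mul_pow]; norm_num
  have h6 : 0 < σ * (r ^ (m+1) / ((m:ℝ)+1)) := by positivity
  rw [← div_eq_inv_mul, ← mul_div_assoc, le_div_iff₀ h6]
  calc (f y - f a) ^ 2 * (σ * (r ^ (m+1) / ((m:ℝ)+1)))
      = 20 ^ (m+1) * (σ * (f y - f a) ^ 2 * ((5/100:ℝ) ^ (m+1) * r ^ (m+1) / (m+1))) := by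
        linear_combination (-(f y - f a) ^ 2 * (σ * (r ^ (m+1) / ((m:ℝ)+1)))) * h5
    _ ≤ _ := by gcongr

lemma eq_zero_of_sM (hf : Hm f R) {ρ : ℝ} (hρ : 0 < ρ) (hρR : ρ ≤ R) (h : sM (fun x => f x ^ 2) ρ = 0) :
    ∀ x ∈ closedBall (0 : ES (m + 1)) ρ, f x = 0 := by
  have h1 : ∀ x ∈ ball (0 : ES (m + 1)) ρ, f x = 0 := by
    intro x hx
    rw [mem_ball_zero_iff] at hx
    have hd : 0 < ρ - ‖x‖ := by linarith
    have := pointwise_le_sM hf (x := x) (ρ := ρ - ‖x‖) (s := ρ) (L := ρ / (ρ - ‖x‖)) hd (by linarith) hρR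
      (by rw [div_mul_cancel₀ _ hd.ne'])
    rw [h, mul_zero] at this
    have h2 := sph_real_univ_pos m
    have h3 : f x ^ 2 = 0 := by nlinarith [sq_nonneg (f x)]
    simpa using h3
  have hcl : IsClosed {x | f x = 0} := isClosed_eq hf.1.continuous continuous_const
  rw [← closure_ball _ hρ.ne']
  exact fun x hx => (closure_minimal h1 hcl) hx

/-- The parity part of `f` opposite to the parity of the integer nearest to the frequency is small
on the sphere on which `f` is almost homogeneous. -/
lemma wrong_parity_small (hf : Hm f R) {s N : ℝ} (hs : s ∈ Icc 0 R) (k : ℕ) (hk : |N - k| ≤ 1 / 2) :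
    sM (fun x => (1 / 2 * f x + -((-1) ^ k / 2) * f (-x)) ^ 2) s
      ≤ 4 * sM (fun x => (eul f x - N * f x) ^ 2) s := by
  have hk2 : ((-1:ℝ) ^ k) ^ 2 = 1 := by rw [← pow_mul, mul_comm, pow_mul]; simp
  set c : ℝ := (-1) ^ k with hc
  set w : ES (m+1) → ℝ := fun x => 1 / 2 * f x + -(c / 2) * f (-x) with hw
  have hw1 : Hm w R := (hf.const_mul _).add (hf.neg_arg.const_mul _)
  have hwp : ∀ x, w (-x) = (-1) ^ (k+1) * w x := by
    intro x
    simp only [hw, neg_neg, pow_succ, ← hc]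
    linear_combination (- f (-x) / 2) * hk2
  have gap := gap_parity k hw1 hwp s hs
  have c1 := hw1.1.continuous
  have c2 := cont_eul hw1.1
  have c3 := hf.1.continuous
  have c4 := cont_eul hf.1
  have hwe : ∀ x, eul w x = 1 / 2 * eul f x + -(c / 2) * eul f (-x) := by
    intro x
    have hn := smooth_one hf.neg_arg.1
    rw [hw, eul_add (contDiff_const.mul (smooth_one hf.1)) (contDiff_const.mul hn),
      eul_const_mul (smooth_one hf.1), eul_const_mul hn, eul_neg_arg (smooth_one hf.1)]
  have h1 : sM (fun x => (eul w x - k * w x) ^ 2) s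
      ≤ sM (fun x => 2 * (eul w x - N * w x) ^ 2 + 1 / 2 * w x ^ 2) s := by
    refine sM_mono (by fun_prop) (by fun_prop) (fun x => ?_) s
    have hk3 : (N - k) ^ 2 ≤ 1 / 4 := by
      rw [← sq_abs]; nlinarith [abs_nonneg (N - k)]
    nlinarith [sq_nonneg ((eul w x - N * w x) - (N - k) * w x), mul_le_mul_of_nonneg_right hk3 (sq_nonneg (w x))]
  rw [sM_add (by fun_prop) (by fun_prop), sM_const_mul, sM_const_mul] at h1
  have h2 : sM (fun x => (eul w x - N * w x) ^ 2) s
      ≤ sM (fun x => 1 / 2 * (eul f x - N * f x) ^ 2 + 1 / 2 * (eul f (-x) - N * f (-x)) ^ 2) s := by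
    refine sM_mono (by fun_prop) (by fun_prop) (fun x => ?_) s
    rw [hwe]; simp only [hw]
    set A := eul f x - N * f x with hA
    set B := eul f (-x) - N * f (-x) with hB
    have : 1 / 2 * eul f x + -(c / 2) * eul f (-x) - N * (1 / 2 * f x + -(c / 2) * f (-x)) = (A - c * B) / 2 := by
      rw [hA, hB]; ring
    rw [this]
    nlinarith [sq_nonneg (A + c * B)]
  rw [sM_add (by fun_prop) (by fun_prop), sM_const_mul, sM_const_mul,
    sM_neg_arg (fun x => (eul f x - N * f x) ^ 2)] at h2
  linarith

set_option maxHeartbeats 1000000 in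
/-- The main estimate for a smooth harmonic `f` with `f 0 = 0`: the value at a critical point `a` near
the origin is controlled by the pinching of the frequency about the origin. -/
lemma core (hf : Hm f R) (h0 : f 0 = 0) {r : ℝ} (hr : 0 < r) (hrR : 3 * r / 2 ≤ R) {a : ES (m + 1)}
    (ha : ‖a‖ ≤ r / 2) (hcrit : fderiv ℝ f a = 0)
    (hW : fr f (3 * r / 2) - fr f (r / 2) ≤ 1 / (16 * 8 ^ (m + 2))) :
    |f a| ≤ Real.sqrt (16 * 8 ^ (m + 2) * 20 ^ (m + 1)) * Real.sqrt (fr f (3 * r / 2) - fr f (r / 2)) *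
      Real.sqrt (⨍ z in ball a r, (f z - f a) ^ 2) := by
  have hh0 : 0 ≤ sM (fun x => f x ^ 2) (r/2) := sM_nonneg (fun x => sq_nonneg _) _
  rcases hh0.eq_or_lt with hh | hh
  · rw [eq_zero_of_sM hf (by positivity) (by linarith) hh.symm a (by simpa using ha), abs_zero]
    positivity
  obtain ⟨s, hs1, hs2, hp, hS⟩ := pinch hf hr hrR hh
  have hWnn : 0 ≤ fr f (3 * r / 2) - fr f (r / 2) :=
    sub_nonneg.2 (fr_mono hf (by positivity) hh ⟨le_rfl, by linarith⟩ ⟨by linarith, hrR⟩ (by linarith))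
  set W := fr f (3 * r / 2) - fr f (r / 2) with hWdef
  set N := fr f s with hN
  set h := sM (fun x => f x ^ 2) s with hh'
  set S := sM (fun x => (eul f x - N * f x) ^ 2) s with hSdef
  set A := ⨍ z in ball a r, (f z - f a) ^ 2 with hA
  set σ := (sph (m+1)).real univ with hσ
  have hσp : 0 < σ := sph_real_univ_pos m
  have hs0 : 0 < s := by linarith
  have hsR : s ≤ R := by linarith
  have hA0 : 0 ≤ A := by
    rw [hA, setAverage_eq]
    exact smul_nonneg (by positivity) (integral_nonneg fun z => sq_nonneg _)
  have hP : (8:ℝ) ≤ 8 ^ (m + 2) := by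
    calc (8:ℝ) = 8 ^ 1 := by norm_num
      _ ≤ 8 ^ (m+2) := pow_le_pow_right₀ (by norm_num) (by omega)
  have hW' : W * (16 * 8 ^ (m + 2)) ≤ 1 := by
    rw [le_div_iff₀ (by positivity)] at hW; exact hW
  have hW128 : W ≤ 1 / 128 := by
    have := mul_le_mul_of_nonneg_left hP hWnn
    linarith
  -- `N ≥ 1/2`: since `f 0 = 0`, `gap_zero` gives `h ≤ ∫ (E f)² = N² h + S` with `S ≤ 2 W h`
  have hN0 : 0 ≤ N := div_nonneg (hf.mul_eul_nonneg hs0.le hsR) hp.le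
  have hN2 : 1 / 4 ≤ N ^ 2 := by
    have h1 := gap_zero hf h0 s ⟨hs0.le, hsR⟩
    have h2 := defect_eq hf.1 hp.ne'
    rw [← hN, ← hh', ← hSdef] at h2
    have h3 : h * (1 - 2 * W - N ^ 2) ≤ 0 := by rw [← hh'] at h1; linarith
    by_contra hcon
    push Not at hcon
    have : 0 < h * (1 - 2 * W - N ^ 2) := mul_pos hp (by linarith)
    linarith
  obtain ⟨k, hk⟩ : ∃ k : ℕ, |N - k| ≤ 1 / 2 := by
    refine ⟨⌊N + 1/2⌋₊, ?_⟩
    have h1 := Nat.floor_le (show 0 ≤ N + 1/2 by linarith)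
    have h2 := Nat.lt_floor_add_one (N + 1/2)
    rw [abs_le]; constructor <;> linarith
  have hw := wrong_parity_small hf ⟨hs0.le, hsR⟩ k hk
  have hk2 : ((-1:ℝ) ^ k) ^ 2 = 1 := by rw [← pow_mul, mul_comm, pow_mul]; simp
  set c : ℝ := (-1) ^ k with hc
  set w : ES (m+1) → ℝ := fun x => 1 / 2 * f x + -(c / 2) * f (-x) with hwdef
  have hfc := hf.1.continuous
  -- On the half sphere facing `a`, `|y - a|² ≤ s² + |a|² ≤ (0.64 + 0.25) r²`, so `f y` is controlled
  -- by the average on `B_r(a)`. On the opposite half sphere `f` equals, up to `w`, a signed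
  -- reflection of itself.
  set K := 2 * 20 ^ (m+1) * A + 2 * f a ^ 2 with hK
  have hhalf : ∀ y : ES (m+1), ‖y‖ = s → 0 ≤ ⟪y, a⟫ → f y ^ 2 ≤ K := by
    intro y hy hya
    have h1 : ‖y - a‖ ≤ 95 / 100 * r := by
      refine abs_le_of_sq_le_sq' ?_ (by positivity) |>.2
      rw [norm_sub_sq_real, hy]
      nlinarith [norm_nonneg a]
    have h2 := pointwise_le_average hf hr (by linarith) h1
    nlinarith [sq_nonneg (f y - 2 * f a)]
  have hpt : ∀ y : ES (m+1), ‖y‖ = s → f y ^ 2 ≤ 8 * w y ^ 2 + 2 * K := by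
    intro y hy
    have hKnn : 0 ≤ K := by positivity
    rcases le_total 0 ⟪y, a⟫ with h1 | h1
    · have := hhalf y hy h1
      linarith [sq_nonneg (w y)]
    · have h2 := hhalf (-y) (by simpa using hy) (by simpa using h1)
      have h3 : f y = 2 * w y + c * f (-y) := by simp only [hwdef]; ring
      rw [h3]
      have h4 : (c * f (-y)) ^ 2 = f (-y) ^ 2 := by rw [mul_pow, hk2, one_mul]
      have h5 : (2 * w y + c * f (-y)) ^ 2
          = 8 * w y ^ 2 + 2 * (c * f (-y)) ^ 2 - (2 * w y - c * f (-y)) ^ 2 := by ring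
      rw [h5, h4]
      linarith [sq_nonneg (2 * w y - c * f (-y))]
  have hhle : h ≤ 8 * sM (fun x => w x ^ 2) s + 2 * K * σ := by
    have hwc : Continuous w := by simp only [hwdef]; fun_prop
    calc h ≤ ∫ z, (8 * w (s • z) ^ 2 + 2 * K) ∂(sph (m+1)) := by
          refine integral_mono_ae (sM_integrable (f := fun x => f x ^ 2) (by fun_prop) s) (sph_integrable (by fun_prop)) ?_
          filter_upwards [sph_ae_norm (m+1)] with z hz
          exact hpt (s • z) (by rw [norm_smul, hz, Real.norm_of_nonneg hs0.le, mul_one])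
      _ = _ := by
          rw [integral_add (sph_integrable (by fun_prop)) (integrable_const _), integral_const_mul]
          simp [sM, hσ]; ring
  have hhK : h ≤ 4 * K * σ := by
    have := mul_le_mul_of_nonneg_left hW128 hp.le
    linarith
  -- `E f - N f` is harmonic, small on the sphere of radius `s`, and equals `-N f a` at `a` because
  -- the gradient of `f` vanishes there
  have hFa := pointwise_le_sM (f := fun x => eul f x + (-N) * f x) (hf.eul.add (hf.const_mul _))
    (x := a) (ρ := r / 10) (s := s) (L := 8) (by positivity) (by linarith) hsR (by linarith)
  have e1 : eul f a + (-N) * f a = -N * f a := by rw [eul, hcrit]; simp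
  have e2 : sM (fun x => (eul f x + (-N) * f x) ^ 2) s = S := by
    rw [hSdef]; congr 1; ext x; ring
  simp only [e2, e1] at hFa
  have hfin1 : σ * (f a ^ 2 / 4) ≤ σ * (8 ^ (m + 2) * K * W) := by
    calc σ * (f a ^ 2 / 4) ≤ σ * (-N * f a) ^ 2 := by
          refine mul_le_mul_of_nonneg_left ?_ hσp.le
          have := mul_le_mul_of_nonneg_right hN2 (sq_nonneg (f a))
          linarith
      _ ≤ 8 ^ (m+1) * S := hFa
      _ ≤ 8 ^ (m+1) * (2 * h * W) := by gcongr
      _ ≤ 8 ^ (m+1) * (2 * (4 * K * σ) * W) := by gcongr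
      _ = _ := by ring
  have hfin2 := le_of_mul_le_mul_left hfin1 hσp
  -- the term `f a ^ 2` hidden in `K` is absorbed on the left by the smallness of `W`
  have hfin3 : f a ^ 2 ≤ 16 * 8 ^ (m+2) * 20 ^ (m+1) * W * A := by
    have h1 : f a ^ 2 * (W * (16 * 8 ^ (m + 2))) ≤ f a ^ 2 * 1 := by gcongr
    rw [hK] at hfin2
    linarith
  rw [← Real.sqrt_mul (by positivity), ← Real.sqrt_mul (by positivity)]
  exact Real.abs_le_sqrt hfin3

end

/-! ### Passage to the frequency of the statement -/

lemma gradient_apply {n : ℕ} (u : ES n → ℝ) (x : ES n) (i : Fin n) : gradient u x i = pd i u x := by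
  have h : ⟪gradient u x, EuclideanSpace.single i (1:ℝ)⟫ = pd i u x := by
    rw [gradient, InnerProductSpace.toDual_symm_apply]; rfl
  rw [← h, EuclideanSpace.inner_single_right]
  simp

lemma norm_gradient_sq {n : ℕ} (u : ES n → ℝ) (x : ES n) : ‖gradient u x‖ ^ 2 = ∑ i, pd i u x * pd i u x := by
  rw [EuclideanSpace.norm_sq_eq]
  refine Finset.sum_congr rfl fun i _ => ?_
  rw [gradient_apply, Real.norm_eq_abs, sq_abs, sq]

lemma pd_add_const {n : ℕ} (u : ES n → ℝ) (c : ℝ) (i : Fin n) (x : ES n) :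
    pd i (fun y => u y + c) x = pd i u x := by
  simp [pd]

/-- The normalized frequency of the statement is a dimensional multiple of `fr`; the factor is the
ratio of the Hausdorff measure to the surface measure. -/
lemma iN_eq (m : ℕ) : ∃ c : ℝ, 0 < c ∧ ∀ (u : ES (m + 1) → ℝ) (p : ES (m + 1)) (R ρ : ℝ),
    Hm (fun x => u (p + x) + -u p) R → Continuous u → 0 < ρ → ρ ≤ R →
    iN u p ρ = fr (fun x => u (p + x) + -u p) ρ / c := by
  obtain ⟨c, hc, h⟩ := exists_hausdorff_const m
  refine ⟨c, hc, fun u p R ρ hv hu hρ hρR => ?_⟩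
  set v : ES (m+1) → ℝ := fun x => u (p + x) + -u p with hvd
  have hD : iD u p ρ = ∫ x in ball 0 ρ, ∑ i, pd i v x * pd i v x := by
    rw [iD, integral_ball_translate]
    congr 1; ext x
    rw [norm_gradient_sq]
    simp only [hvd, pd_add_const, pd_translate]
  have hH : iH u p ρ = c * (ρ ^ m * sM (fun x => v x ^ 2) ρ) := by
    rw [iH, h (fun x => (u x - u p) ^ 2) (by fun_prop) p ρ hρ]
    simp only [hvd, sub_eq_add_neg]
  rw [iN, hD, Hm.green hv.1 hv hρ.le hρR, hH, fr, mul_left_comm, mul_div_mul_left _ _ (pow_ne_zero m hρ.ne'),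
    div_div, mul_comm c]

/-- `core` applied to `x ↦ u (X₂ + x) - u X₂`. -/
lemma smooth_main (m : ℕ) : ∃ C ε : ℝ, 0 < C ∧ 0 < ε ∧ ∀ u : ES (m + 1) → ℝ, Hm u (5 / 2) →
    ∀ r : ℝ, 0 < r → r < 1 → ∀ X₁ X₂ : ES (m + 1), X₂ ∈ ball (0 : ES (m + 1)) 1 →
    dist X₁ X₂ ≤ r / 2 → iW u X₂ r ≤ ε → gradient u X₁ = 0 →
    |u X₁ - u X₂| ≤ C * Real.sqrt (iW u X₂ r) * Real.sqrt (⨍ z in ball X₁ r, (u z - u X₁) ^ 2) := by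
  obtain ⟨c, hc, hN⟩ := iN_eq m
  refine ⟨Real.sqrt (16 * 8 ^ (m + 2) * 20 ^ (m + 1)) * Real.sqrt c, 1 / (16 * 8 ^ (m + 2)) / c,
    by positivity, by positivity, ?_⟩
  intro u hu r hr hr1 X₁ X₂ hX₂ hd hW hg
  rw [mem_ball_zero_iff] at hX₂
  have hv : Hm (fun x => u (X₂ + x) + -u X₂) (3 / 2) :=
    (hu.translate X₂ (by linarith)).add (Hm.const _)
  have hWe : fr (fun x => u (X₂ + x) + -u X₂) (3 * r / 2) - fr (fun x => u (X₂ + x) + -u X₂) (r / 2)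
      = c * iW u X₂ r := by
    rw [iW, hN u X₂ (3/2) _ hv hu.1.continuous (by positivity) (by linarith),
      hN u X₂ (3/2) _ hv hu.1.continuous (by positivity) (by linarith)]
    field_simp
  have key := core hv (by simp) hr (by linarith) (a := X₁ - X₂) (by rwa [← dist_eq_norm]) ?_ ?_
  · rw [hWe, Real.sqrt_mul hc.le] at key
    simp only [add_sub_cancel, ← sub_eq_add_neg] at key
    have havg : ⨍ z in ball (X₁ - X₂) r, (u (X₂ + z) - u X₂ - (u X₁ - u X₂)) ^ 2
        = ⨍ z in ball X₁ r, (u z - u X₁) ^ 2 := by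
      rw [setAverage_eq, setAverage_eq, volume_ball_real hr.le, volume_ball_real hr.le,
        integral_ball_translate X₁, integral_ball_translate (X₁ - X₂)]
      congr 2
      ext x
      have : X₂ + (X₁ - X₂ + x) = X₁ + x := by abel
      rw [this]; ring
    rw [havg] at key
    calc _ ≤ _ := key
      _ = _ := by ring
  · have hf : fderiv ℝ u X₁ = 0 := by
      ext y
      rw [fderiv_eq_sum]
      simp [← gradient_apply, hg]
    have h2 := fderiv_comp_add_left (𝕜 := ℝ) (f := u) (x := X₁ - X₂) X₂
    rw [fderiv_add_const, h2, add_sub_cancel, hf]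
  · rw [hWe]
    rw [le_div_iff₀ hc] at hW
    linarith

/-! ### Regularity of harmonic functions -/

lemma pd_pd_eq {n : ℕ} {f : ES n → ℝ} {x : ES n} (hf : ContDiffAt ℝ 2 f x) (i : Fin n) :
    pd i (pd i f) x = iteratedFDeriv ℝ 2 f x fun _ => EuclideanSpace.single i 1 := by
  have hd : DifferentiableAt ℝ (fderiv ℝ f) x :=
    (hf.fderiv_right (m := 1) (by norm_num)).differentiableAt one_ne_zero
  have := fderiv_clm_apply hd (differentiableAt_const (EuclideanSpace.single i (1:ℝ)))
  have hpd : pd i f = fun y => fderiv ℝ f y (EuclideanSpace.single i 1) := rfl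
  rw [iteratedFDeriv_two_apply, pd, hpd, this]
  simp

lemma lap_congr_nhds {n : ℕ} {f g : ES n → ℝ} {x : ES n} (h : f =ᶠ[nhds x] g) : lap f x = lap g x := by
  refine Finset.sum_congr rfl fun i _ => pd_congr_nhds ?_ i
  filter_upwards [h.eventuallyEq_nhds] with y hy using pd_congr_nhds hy i

/-- Multiplying by a bump function makes a harmonic function globally `C²` without changing it on a
smaller ball. -/
lemma exists_cutoff {n : ℕ} {u : ES n → ℝ} (hu : IsHarmonicOn u (ball 0 3)) :
    ∃ v : ES n → ℝ, ContDiff ℝ 2 v ∧ (∀ x ∈ ball (0 : ES n) (28/10), v x = u x) ∧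
      ∀ x ∈ ball (0 : ES n) (28/10), lap v x = 0 := by
  let χ : ContDiffBump (0 : ES n) := ⟨28/10, 29/10, by norm_num, by norm_num⟩
  have hvu : ∀ x ∈ ball (0 : ES n) (28/10), χ x * u x = u x := fun x hx => by
    rw [χ.one_of_mem_closedBall (ball_subset_closedBall hx), one_mul]
  have hc2 : ContDiff ℝ 2 fun x => χ x * u x := by
    rw [contDiff_iff_contDiffAt]
    intro x
    by_cases hx : x ∈ ball (0 : ES n) 3
    · exact χ.contDiff.contDiffAt.mul (hu.1.contDiffAt (isOpen_ball.mem_nhds hx))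
    · have hx' : x ∈ (closedBall (0 : ES n) (29/10))ᶜ := by
        simp only [mem_ball_zero_iff, not_lt] at hx
        simp only [mem_compl_iff, mem_closedBall_zero_iff, not_le]
        linarith
      refine ContDiffAt.congr_of_eventuallyEq (f := fun _ => (0:ℝ)) contDiffAt_const ?_
      filter_upwards [isClosed_closedBall.isOpen_compl.mem_nhds hx'] with y hy
      rw [χ.zero_of_le_dist, zero_mul]
      simp only [mem_compl_iff, mem_closedBall, not_le] at hy
      exact hy.le
  refine ⟨fun x => χ x * u x, hc2, hvu, fun x hx => ?_⟩
  have hx3 : x ∈ ball (0 : ES n) 3 := ball_subset_ball (by norm_num) hx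
  have hev : (fun x => χ x * u x) =ᶠ[nhds x] u := by
    filter_upwards [isOpen_ball.mem_nhds hx] with y hy using hvu y hy
  rw [← hu.2 x hx3]
  refine Finset.sum_congr rfl fun i _ => ?_
  rw [pd_pd_eq hc2.contDiffAt, iteratedFDerivWithin_of_isOpen 2 isOpen_ball hx3,
    (Filter.EventuallyEq.iteratedFDeriv ℝ hev 2).eq_of_nhds]

/-- Mean value property, by the Green identity with the constant function `1`. -/
lemma mean_value {m : ℕ} {g : ES (m + 1) → ℝ} {R : ℝ} (hg : ContDiff ℝ 2 g)
    (hl : ∀ x ∈ ball 0 R, lap g x = 0) {t : ℝ} (ht : 0 ≤ t) (htR : t ≤ R) :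
    sM g t = g 0 * (sph (m+1)).real univ := by
  rw [← sM_zero]
  rcases ht.eq_or_lt with rfl | ht
  · rfl
  have hg1 : ContDiff ℝ 1 g := hg.of_le (by norm_num)
  obtain ⟨s, hs, hse⟩ := exists_hasDerivAt_eq_slope (sM g) _ ht (sM_continuous hg.continuous).continuousOn
    (fun s hs => sM_deriv_eul hg1 hs.1.ne')
  have h1 := green (f := fun _ => (1:ℝ)) contDiff_const hg hs.1.le fun x hx =>
    hl x (ball_subset_ball (hs.2.le.trans htR) hx)
  have h2 : ∀ (i : Fin (m+1)) x, pd i (fun _ : ES (m+1) => (1:ℝ)) x = 0 := fun i x => by simp [pd]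
  simp only [h2, zero_mul, Finset.sum_const_zero, integral_zero, mul_zero, one_mul] at h1
  have h3 : sM (eul g) s = 0 := by
    rcases mul_eq_zero.1 h1.symm with h | h
    · exact absurd h (pow_ne_zero m hs.1.ne')
    · exact h
  rw [h3, zero_div, eq_comm, div_eq_zero_iff] at hse
  rcases hse with h | h <;> linarith

/-- Radial smooth mollifier supported in the ball of radius `1/10`, not normalized. -/
def moll {n : ℕ} (y : ES n) : ℝ := Real.smoothTransition (1 - 100 * ‖y‖ ^ 2)

lemma moll_contDiff {n : ℕ} : ContDiff ℝ ∞ (moll (n := n)) :=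
  Real.smoothTransition.contDiff.comp (contDiff_const.sub (contDiff_const.mul (contDiff_norm_sq ℝ)))

lemma moll_zero {n : ℕ} {y : ES n} (h : 1 / 10 ≤ ‖y‖) : moll y = 0 :=
  Real.smoothTransition.zero_of_nonpos (by nlinarith)

lemma moll_compact {n : ℕ} : HasCompactSupport (moll (n := n)) := by
  refine HasCompactSupport.intro (isCompact_closedBall 0 (1/10)) fun x hx => moll_zero ?_
  simp only [mem_closedBall_zero_iff, not_le] at hx
  exact hx.le

lemma moll_integral_pos {n : ℕ} : 0 < ∫ y : ES n, moll y := by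
  refine moll_contDiff.continuous.integral_pos_of_hasCompactSupport_nonneg_nonzero moll_compact
    (fun x => Real.smoothTransition.nonneg _) (x := 0) ?_
  simp [moll]

lemma moll_polar {m : ℕ} {g : ES (m + 1) → ℝ} (hg : Continuous g) :
    ∫ y, moll y * g y = ∫ t in (0:ℝ)..(1/10), t ^ m * (Real.smoothTransition (1 - 100 * t ^ 2) * sM g t) := by
  have hc : Continuous fun y => moll y * g y := moll_contDiff.continuous.mul hg
  have h1 : ∫ y, moll y * g y = ∫ y in ball 0 (1/10), moll y * g y := by
    refine (setIntegral_eq_integral_of_forall_compl_eq_zero fun x hx => ?_).symm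
    rw [moll_zero, zero_mul]
    simpa using hx
  rw [h1, polar hc (by norm_num)]
  refine intervalIntegral.integral_congr fun t ht => ?_
  rw [uIcc_of_le (by norm_num)] at ht
  congr 1
  rw [sM, sM, ← integral_const_mul]
  refine integral_congr_ae ?_
  filter_upwards [sph_ae_norm (m+1)] with w hw
  simp [moll, norm_smul, hw]

/-- A harmonic function coincides on a smaller ball with a globally smooth function, harmonic on
that ball: by the mean value property, convolution with a normalized radial mollifier does not
change it. -/
lemma exists_smooth {m : ℕ} {u : ES (m + 1) → ℝ} (hu : IsHarmonicOn u (ball 0 3)) :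
    ∃ v : ES (m + 1) → ℝ, Hm v (5 / 2) ∧ ∀ x ∈ ball (0 : ES (m + 1)) (5 / 2), v x = u x := by
  obtain ⟨u₁, hc, hu₁, hl⟩ := exists_cutoff hu
  set v : ES (m+1) → ℝ := fun x => (∫ y : ES (m+1), moll y)⁻¹ * ∫ y, moll y * u₁ (x - y) with hv
  have hvs : ContDiff ℝ ∞ v := by
    refine contDiff_const.mul ?_
    exact moll_compact.contDiff_convolution_left (ContinuousLinearMap.mul ℝ ℝ) (μ := volume)
      moll_contDiff hc.continuous.locallyIntegrable
  have hvu : ∀ x ∈ ball (0 : ES (m+1)) (5/2), v x = u₁ x := by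
    intro x hx
    rw [mem_ball_zero_iff] at hx
    have hcont := hc.continuous
    have h1 : ∀ t ∈ Icc (0:ℝ) (1/10), sM (fun y => u₁ (x - y)) t = u₁ x * (sph (m+1)).real univ := by
      intro t ht
      have h2 := mean_value (g := fun y => u₁ (x + y)) (R := 1/10)
        (hc.comp (contDiff_const.add contDiff_id)) (fun y hy => ?_) ht.1 ht.2
      · have h3 := sM_neg_arg (fun y => u₁ (x + y)) t
        simp only [← sub_eq_add_neg] at h3
        rw [h3, h2, add_zero]
      · rw [lap_translate]
        refine hl _ ?_
        rw [mem_ball_zero_iff] at hy ⊢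
        linarith [norm_add_le x y]
    have h4 : ∫ y, moll y * u₁ (x - y) = u₁ x * ∫ y : ES (m+1), moll y := by
      have h5 := moll_polar (m := m) (g := fun _ => (1:ℝ)) continuous_const
      simp only [mul_one] at h5
      rw [h5, moll_polar (by fun_prop), ← intervalIntegral.integral_const_mul]
      refine intervalIntegral.integral_congr fun t ht => ?_
      rw [uIcc_of_le (by norm_num)] at ht
      rw [h1 t ht]
      simp [sM]
      ring
    simp only [hv]
    rw [h4, mul_comm (u₁ x), inv_mul_cancel_left₀ moll_integral_pos.ne']
  refine ⟨v, ⟨hvs, fun x hx => ?_⟩, fun x hx => ?_⟩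
  · rw [lap_congr_nhds (g := u₁), hl x (ball_subset_ball (by norm_num) hx)]
    filter_upwards [isOpen_ball.mem_nhds hx] with y hy using hvu y hy
  · rw [hvu x hx, hu₁ x (ball_subset_ball (by norm_num) hx)]

section
variable {n : ℕ} {u v : ES n → ℝ}

lemma gradient_congr (h : ∀ x ∈ ball (0 : ES n) (5/2), v x = u x) {x : ES n} (hx : x ∈ ball (0 : ES n) (5/2)) :
    gradient v x = gradient u x := by
  have : v =ᶠ[nhds x] u := by
    filter_upwards [isOpen_ball.mem_nhds hx] with y hy using h y hy
  rw [gradient, gradient, this.fderiv_eq]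

lemma iN_congr (h : ∀ x ∈ ball (0 : ES n) (5/2), v x = u x) {p : ES n} (hp : p ∈ ball (0 : ES n) 1) {ρ : ℝ}
    (hρ : ρ < 3 / 2) : iN v p ρ = iN u p ρ := by
  rw [mem_ball_zero_iff] at hp
  have hsub : closedBall p ρ ⊆ ball (0 : ES n) (5/2) := by
    refine closedBall_subset_ball' ?_
    rw [dist_zero_right]; linarith
  have h1 : iD v p ρ = iD u p ρ := by
    refine setIntegral_congr_fun measurableSet_ball fun x hx => ?_
    rw [gradient_congr h (hsub (ball_subset_closedBall hx))]
  have h2 : iH v p ρ = iH u p ρ := by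
    refine setIntegral_congr_fun isClosed_sphere.measurableSet fun x hx => ?_
    rw [h x (hsub (sphere_subset_closedBall hx)), h p (by rw [mem_ball_zero_iff]; linarith)]
  rw [iN, iN, h1, h2]

end

/-- Lemma A.1(ii): variation of the value of `u` near a critical point.
Let `u` be a nonconstant harmonic function in `B_3(0) ⊆ ℝ^n` with `N(0,3) ≤ Λ`,
`0 < r < 1`, `X₁, X₂ ∈ B_1(0)` with `|X₁ - X₂| ≤ r/2` and `W(X₁,r), W(X₂,r)` small.
If moreover `∇u(X₁) = 0` then
`|u(X₁) - u(X₂)| ≤ C (W(X₁,r)^{1/2} + W(X₂,r)^{1/2}) (⨍_{B_r(X₁)} |u - u(X₁)|²)^{1/2}`,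
with `C = C(n, Λ)`. -/
theorem value_variation_at_critical_point (n : ℕ) (Λ : ℝ) (hΛ : 0 < Λ) :
    ∃ C ε : ℝ, 0 < C ∧ 0 < ε ∧
      ∀ u : ES n → ℝ, IsHarmonicOn u (ball 0 3) →
        (¬ ∀ x ∈ ball (0 : ES n) 3, u x = u 0) →
        iN u 0 3 ≤ Λ →
        ∀ r : ℝ, 0 < r → r < 1 →
          ∀ X₁ X₂ : ES n, X₁ ∈ ball (0 : ES n) 1 → X₂ ∈ ball (0 : ES n) 1 →
            dist X₁ X₂ ≤ r / 2 → iW u X₁ r ≤ ε → iW u X₂ r ≤ ε →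
            gradient u X₁ = 0 →
            |u X₁ - u X₂| ≤
              C * (Real.sqrt (iW u X₁ r) + Real.sqrt (iW u X₂ r)) *
                Real.sqrt (⨍ z in ball X₁ r, (u z - u X₁) ^ 2) := by
  cases n with
  | zero =>
    -- the space is a point
    refine ⟨1, 1, one_pos, one_pos, fun u _ _ _ r _ _ X₁ X₂ _ _ _ _ _ _ => ?_⟩
    rw [Subsingleton.elim X₁ X₂, sub_self, abs_zero]
    positivity
  | succ m =>
    obtain ⟨C, ε, hC, hε, H⟩ := smooth_main m
    refine ⟨C, ε, hC, hε, fun u hu _ _ r hr hr1 X₁ X₂ hX₁ hX₂ hd _ hW hg => ?_⟩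
    obtain ⟨v, hv, hvu⟩ := exists_smooth hu
    have hsub : ball (0 : ES (m+1)) 1 ⊆ ball 0 (5/2) := ball_subset_ball (by norm_num)
    have hWe : iW v X₂ r = iW u X₂ r := by
      rw [iW, iW, iN_congr hvu hX₂ (by linarith), iN_congr hvu hX₂ (by linarith)]
    have key := H v hv r hr hr1 X₁ X₂ hX₂ hd (hWe ▸ hW) (by rw [gradient_congr hvu (hsub hX₁), hg])
    have havg : ⨍ z in ball X₁ r, (v z - v X₁) ^ 2 = ⨍ z in ball X₁ r, (u z - u X₁) ^ 2 := by
      rw [setAverage_eq, setAverage_eq]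
      congr 1
      refine setIntegral_congr_fun measurableSet_ball fun x hx => ?_
      rw [hvu X₁ (hsub hX₁), hvu x]
      refine ball_subset_ball' (ε₁ := r) ?_ hx
      rw [mem_ball] at hX₁
      linarith
    rw [hWe, havg, hvu X₁ (hsub hX₁), hvu X₂ (hsub hX₂)] at key
    refine key.trans ?_
    gcongr
    exact le_add_of_nonneg_left (Real.sqrt_nonneg _)
end
end
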